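/- arXiv:1407.4295 — 6 statements merged into one kernel-verified Lean document; each statement's English description precedes it below -/
import Mathlib

section
/- Let (A_N)_{N∈ℕ} and A be bounded subsets of ℂ such that d_H(A_N, A) → 0 as N → ∞. Then for every δ > 0 there exists N₀ such that for all N > N₀ one has Ext A ⊆ (Ext A_N)^δ. (Lemma 3.3 / lem:topological of the paper.) -/
/-!
The proof splits `Ext A₀` into a far part and a bounded part.

A point lies in `Ext A` as soon as it belongs to an unbounded preconnected set avoiding `closure A`
(`mem_extSet_of_preconnected`). For a point outside a disc containing `A`, the radial ray starting
there is such a set (`mem_extSet_of_norm_lt`), so far points of `Ext A₀` lie in `Ext (A N)` itself.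

For a fixed `x ∈ Ext A₀`, join `x` to a far point by a path avoiding `closure A₀` and continue by a
ray. The path is compact, so it stays at a positive distance from `closure A₀`, hence avoids
`closure (A N)` for large `N`; thus `x ∈ Ext (A N)` eventually (`eventually_mem_extSet`). The
bounded part of `Ext A₀` is totally bounded, so finitely many such points approximate it
within `δ`, which makes the choice of `N₀` uniform.
-/


open Filter Set MeasureTheory ProbabilityTheory Metric Bornology

noncomputable section

/-- The exterior `Ext A` of a bounded set `A ⊆ ℂ`: the (unique, for bounded `A`) unbounded
connected component of `ℂ \ closure A`; here expressed as the set of points of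
`ℂ \ closure A` whose connected component in `ℂ \ closure A` is unbounded. -/
def extSet (A : Set ℂ) : Set ℂ :=
  {z | ¬ Bornology.IsBounded (connectedComponentIn (closure A)ᶜ z)}

/-- The hull `Hull A = ℂ \ Ext A`. -/
def hullSet (A : Set ℂ) : Set ℂ := (extSet A)ᶜ

/-- The outer boundary `∂_o A`: the topological boundary of `Ext A`. -/
def outerBoundary (A : Set ℂ) : Set ℂ := frontier (extSet A)

/-- `dHLt A A' δ` expresses that the Hausdorff distance
`d_H(A, A') = inf {δ > 0 : A ⊆ (A')^δ and A' ⊆ A^δ}` is `< δ`; here `A^ε` is the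
`ε`-thickening `⋃_{x ∈ A} B(x; ε)` of `A`. -/
def dHLt (A A' : Set ℂ) (δ : ℝ) : Prop :=
  ∃ ε : ℝ, 0 < ε ∧ ε < δ ∧ A ⊆ Metric.thickening ε A' ∧ A' ⊆ Metric.thickening ε A

theorem mem_extSet_of_preconnected {A S : Set ℂ} {x : ℂ} (hx : x ∈ S) (hS : IsPreconnected S)
    (hSA : S ⊆ (closure A)ᶜ) (hb : ¬ Bornology.IsBounded S) : x ∈ extSet A :=
  fun h => hb (h.subset (hS.subset_connectedComponentIn hx hSA))

/-- The radial ray `{t • w | t ≥ 1}` from `w` to infinity. -/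
def radialRay (w : ℂ) : Set ℂ := (fun t : ℝ => (t : ℂ) * w) '' Set.Ici 1

theorem mem_radialRay (w : ℂ) : w ∈ radialRay w := ⟨1, by simp, by simp⟩

theorem isPreconnected_radialRay (w : ℂ) : IsPreconnected (radialRay w) :=
  isPreconnected_Ici.image _ (by fun_prop)

theorem norm_le_of_mem_radialRay {w z : ℂ} (hz : z ∈ radialRay w) : ‖w‖ ≤ ‖z‖ := by
  obtain ⟨t, ht, rfl⟩ := hz
  have ht : (1 : ℝ) ≤ t := ht
  simp only [norm_mul, Complex.norm_real, Real.norm_eq_abs]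
  nlinarith [norm_nonneg w, le_abs_self t]

theorem not_isBounded_radialRay {w : ℂ} (hw : 0 < ‖w‖) : ¬ Bornology.IsBounded (radialRay w) := by
  intro h
  obtain ⟨r, hr⟩ := h.exists_norm_le
  have h1 := hr _ ⟨|r| / ‖w‖ + 1, by simp only [Set.mem_Ici]; linarith [show 0 ≤ |r| / ‖w‖ by positivity], rfl⟩
  simp only [norm_mul, Complex.norm_real, Real.norm_eq_abs] at h1
  have h2 : (|r| / ‖w‖ + 1) * ‖w‖ = |r| + ‖w‖ := by field_simp
  nlinarith [le_abs_self (|r| / ‖w‖ + 1), le_abs_self r]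

theorem radialRay_subset_compl {A : Set ℂ} {R : ℝ} (hA : A ⊆ Metric.closedBall 0 R) {w : ℂ}
    (hw : R < ‖w‖) : radialRay w ⊆ (closure A)ᶜ := by
  intro z hz hzA
  have h1 := closure_minimal hA Metric.isClosed_closedBall hzA
  have h2 := norm_le_of_mem_radialRay hz
  rw [mem_closedBall_zero_iff] at h1
  linarith

theorem mem_extSet_of_norm_lt {A : Set ℂ} {R : ℝ} (hR : 0 ≤ R) (hA : A ⊆ Metric.closedBall 0 R)
    {w : ℂ} (hw : R < ‖w‖) : w ∈ extSet A :=
  mem_extSet_of_preconnected (mem_radialRay w) (isPreconnected_radialRay w)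
    (radialRay_subset_compl hA hw) (not_isBounded_radialRay (hR.trans_lt hw))

/-- The stability of the exterior at one point: a point of `Ext A₀` stays in `Ext A` for every
`A` contained in a small enough thickening of `A₀` (and in a fixed disc). -/
theorem exists_forall_mem_extSet {A₀ : Set ℂ} {R : ℝ} (hR : 0 ≤ R) {x : ℂ} (hx : x ∈ extSet A₀) :
    ∃ η > 0, ∀ A : Set ℂ, A ⊆ Metric.closedBall 0 R → A ⊆ Metric.thickening η A₀ →
      x ∈ extSet A := by
  have hxA : x ∈ (closure A₀)ᶜ := by
    by_contra h
    -- Outside the ambient set, `connectedComponentIn` is empty, hence bounded.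
    exact hx (by simp [connectedComponentIn_eq_empty h])
  have hopen : IsOpen (connectedComponentIn (closure A₀)ᶜ x) :=
    isClosed_closure.isOpen_compl.connectedComponentIn
  obtain ⟨w, hwC, hw⟩ : ∃ w ∈ connectedComponentIn (closure A₀)ᶜ x, R < ‖w‖ := by
    by_contra! h
    exact hx (Metric.isBounded_closedBall.subset fun z hz => mem_closedBall_zero_iff.2 (h z hz))
  have hpc := (IsOpen.isConnected_iff_isPathConnected hopen).1
    (isConnected_connectedComponentIn_iff.2 hxA)
  obtain ⟨γ, hγ⟩ := hpc.joinedIn x (mem_connectedComponentIn hxA) w hwC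
  obtain ⟨ε, hε, hsub⟩ := (isCompact_range γ.continuous).exists_thickening_subset_open
    isClosed_closure.isOpen_compl
    (range_subset_iff.2 fun t => connectedComponentIn_subset _ _ (hγ t))
  refine ⟨ε / 2, by positivity, fun A hAR hA => ?_⟩
  have hγA : range γ ⊆ (closure A)ᶜ := by
    intro y hy hyA
    obtain ⟨a, ha, hya⟩ := Metric.mem_closure_iff.1 hyA (ε / 2) (by positivity)
    obtain ⟨b, hb, hab⟩ := Metric.mem_thickening_iff.1 (hA ha)
    refine hsub (Metric.mem_thickening_iff.2 ⟨y, hy, ?_⟩) (subset_closure hb)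
    rw [dist_comm]
    linarith [dist_triangle y a b]
  refine mem_extSet_of_preconnected (S := range γ ∪ radialRay w) (Or.inl ⟨0, γ.source⟩)
    ((isPreconnected_range γ.continuous).union w ⟨1, γ.target⟩ (mem_radialRay w)
      (isPreconnected_radialRay w))
    (union_subset hγA (radialRay_subset_compl hAR hw)) fun h => ?_
  exact not_isBounded_radialRay (hR.trans_lt hw) (h.subset subset_union_right)

theorem eventually_mem_extSet {A : ℕ → Set ℂ} {A₀ : Set ℂ}
    (hconv : ∀ δ : ℝ, 0 < δ → ∀ᶠ N in Filter.atTop, dHLt (A N) A₀ δ) {R : ℝ} (hR : 0 ≤ R)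
    (hAR : ∀ᶠ N in Filter.atTop, A N ⊆ Metric.closedBall 0 R) {x : ℂ} (hx : x ∈ extSet A₀) :
    ∀ᶠ N in Filter.atTop, x ∈ extSet (A N) := by
  obtain ⟨η, hη, h⟩ := exists_forall_mem_extSet hR hx
  filter_upwards [hconv η hη, hAR] with N ⟨ε, _, hεη, hN, _⟩ hNR
  exact h _ hNR (hN.trans (Metric.thickening_mono hεη.le _))

theorem stmt0 (A : ℕ → Set ℂ) (A₀ : Set ℂ)
    (hA : ∀ N, Bornology.IsBounded (A N)) (hA₀ : Bornology.IsBounded A₀)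
    (hconv : ∀ δ : ℝ, 0 < δ → ∀ᶠ N in Filter.atTop, dHLt (A N) A₀ δ) :
    ∀ δ : ℝ, 0 < δ → ∃ N₀ : ℕ, ∀ N > N₀,
      extSet A₀ ⊆ Metric.thickening δ (extSet (A N)) := by
  intro δ hδ
  obtain ⟨r, hr, hAr⟩ := hA₀.exists_pos_norm_le
  have hR : 0 ≤ r + 1 := by positivity
  have hAR : ∀ᶠ N in Filter.atTop, A N ⊆ Metric.closedBall 0 (r + 1) := by
    filter_upwards [hconv 1 one_pos] with N ⟨ε, _, hε, hN, _⟩ a ha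
    obtain ⟨b, hb, hab⟩ := Metric.mem_thickening_iff.1 (hN ha)
    rw [mem_closedBall_zero_iff]
    rw [dist_eq_norm] at hab
    linarith [norm_le_norm_add_norm_sub' a b, hAr b hb]
  have htb : TotallyBounded (extSet A₀ ∩ Metric.closedBall 0 (r + 1)) :=
    (isCompact_closedBall (0 : ℂ) (r + 1)).totallyBounded.subset inter_subset_right
  obtain ⟨t, hts, htf, hcov⟩ := Metric.finite_approx_of_totallyBounded htb δ hδ
  have hev : ∀ᶠ N in Filter.atTop, ∀ x ∈ t, x ∈ extSet (A N) :=
    (Filter.eventually_all_finite htf).2 fun x hx =>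
      eventually_mem_extSet hconv hR hAR (hts hx).1
  obtain ⟨N₀, hN₀⟩ := Filter.eventually_atTop.1 (hev.and hAR)
  refine ⟨N₀, fun N hN z hz => ?_⟩
  obtain ⟨h1, h2⟩ := hN₀ N hN.le
  by_cases hzR : r + 1 < ‖z‖
  · exact Metric.self_subset_thickening hδ _ (mem_extSet_of_norm_lt hR h2 hzR)
  · obtain ⟨x, hx, hzx⟩ := mem_iUnion₂.1
      (hcov ⟨hz, mem_closedBall_zero_iff.2 (not_lt.1 hzR)⟩)
    exact Metric.mem_thickening_iff.2 ⟨x, h1 x hx, hzx⟩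
end
end

section
/- For any bounded set A ⊆ ℂ and any δ > 0, there exists ε > 0 such that for every bounded set A' ⊆ ℂ with d_H(A, A') < ε one has Ext A ⊆ (Ext A')^δ. (Metric formulation of Lemma lem:topological, as in Remark 3.9 of the paper.) -/
/-!
The exterior of `A` is cut into a far part and a bounded part.  Suppose `closure A` lies in the
closed disc of radius `R - 1`, where `1 < R`.  As soon as `A'` lies in the `1`-thickening of `A`,
the connected set `{z | R < ‖z‖}` avoids `closure A'`, so it lies in `Ext A'`
(`isPreconnected_norm_gt`, `mem_extSet`).  The remaining part of `Ext A` is totally bounded, hence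
covered by finitely many discs of radius `δ` centred at points `w` of `Ext A`.  Each such `w` is
joined to `{z | R < ‖z‖}` by a path in the complement of `closure A`; being compact, the path stays
at positive distance `ε_w` from `closure A`, so it also avoids `closure A'` when `A'` is
`ε_w`-close to `A`, and then `w ∈ Ext A'` (`exists_thickening_mem_extSet`).  The minimum of `1` and
of the finitely many `ε_w` works.
-/


open Filter Set MeasureTheory ProbabilityTheory Metric Bornology

noncomputable section

/-- The exterior of a disc is the image under `exp` of a half-plane, hence connected. -/
lemma isPreconnected_norm_gt {R : ℝ} (hR : 0 < R) : IsPreconnected {z : ℂ | R < ‖z‖} := by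
  have h : {z : ℂ | R < ‖z‖} = Complex.exp '' {w : ℂ | Real.log R < w.re} := by
    ext z
    simp only [mem_ofPred_eq, mem_image]
    constructor
    · intro hz
      refine ⟨Complex.log z, ?_, Complex.exp_log (norm_pos_iff.mp (hR.trans hz))⟩
      rw [Complex.log_re]
      exact Real.log_lt_log hR hz
    · rintro ⟨w, hw, rfl⟩
      rw [Complex.norm_exp]
      exact (Real.log_lt_iff_lt_exp hR).mp hw
  rw [h]
  exact (convex_halfSpace_re_gt _).isPreconnected.image _ Complex.continuous_exp.continuousOn

lemma not_isBounded_norm_gt (R : ℝ) : ¬ Bornology.IsBounded {z : ℂ | R < ‖z‖} := by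
  intro h
  obtain ⟨C, hC⟩ := h.exists_norm_le
  have hn : ‖((|max R C| + 1 : ℝ) : ℂ)‖ = |max R C| + 1 := by
    rw [Complex.norm_real, Real.norm_of_nonneg (by positivity)]
  have h1 := le_abs_self (max R C)
  have h2 := hC ((|max R C| + 1 : ℝ) : ℂ)
    (by rw [mem_ofPred_eq, hn]; linarith [le_max_left R C])
  rw [hn] at h2
  linarith [le_max_right R C]

/-- A connected set that avoids `closure A` and reaches the exterior of a disc containing
`closure A` lies in `Ext A`. -/
lemma mem_extSet {A K : Set ℂ} {R : ℝ} (hR : 0 < R) (hA : {z : ℂ | R < ‖z‖} ⊆ (closure A)ᶜ)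
    (hK : IsPreconnected K) (hKA : K ⊆ (closure A)ᶜ) {v w : ℂ} (hv : v ∈ K) (hvR : R < ‖v‖)
    (hw : w ∈ K) : w ∈ extSet A := by
  intro hb
  have hc : IsPreconnected (K ∪ {z : ℂ | R < ‖z‖}) :=
    hK.union v hv hvR (isPreconnected_norm_gt hR)
  have hsub := hc.subset_connectedComponentIn (x := w) (Or.inl hw) (union_subset hKA hA)
  exact not_isBounded_norm_gt R (hb.subset (subset_union_right.trans hsub))

/-- A point of `Ext A` stays in the exterior of every `A'` contained in a sufficiently small
thickening of `A`, provided `closure A'` lies in a fixed disc of radius `R`. -/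
lemma exists_thickening_mem_extSet {A : Set ℂ} {R : ℝ} (hR : 0 < R) {w : ℂ} (hw : w ∈ extSet A) :
    ∃ ε : ℝ, 0 < ε ∧ ∀ A' : Set ℂ, {z : ℂ | R < ‖z‖} ⊆ (closure A')ᶜ →
      closure A' ⊆ thickening ε A → w ∈ extSet A' := by
  set U := connectedComponentIn (closure A)ᶜ w with hU
  have hwU : ¬ Bornology.IsBounded U := hw
  obtain ⟨v, hvU, hvR⟩ : ∃ v ∈ U, R < ‖v‖ := by
    by_contra! h
    exact hwU (isBounded_iff_forall_norm_le.mpr ⟨R, h⟩)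
  have hwA : w ∈ (closure A)ᶜ := by
    by_contra h
    rw [hU, connectedComponentIn_eq_empty h] at hvU
    exact hvU
  have hUopen : IsOpen U := isClosed_closure.isOpen_compl.connectedComponentIn
  have hUpath : IsPathConnected U :=
    (hUopen.isConnected_iff_isPathConnected).mp (isConnected_connectedComponentIn_iff.mpr hwA)
  obtain ⟨γ, hγ⟩ := hUpath.joinedIn w (mem_connectedComponentIn hwA) v hvU
  have hγA : Disjoint (range γ) (closure A) := by
    rw [← subset_compl_iff_disjoint_right]
    rintro _ ⟨t, rfl⟩
    exact connectedComponentIn_subset _ _ (hγ t)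
  obtain ⟨ε, hε, hd⟩ := hγA.exists_thickenings (isCompact_range γ.continuous) isClosed_closure
  refine ⟨ε, hε, fun A' hA' hsub => ?_⟩
  have hγA' : range γ ⊆ (closure A')ᶜ := by
    rw [subset_compl_iff_disjoint_right]
    refine hd.mono (self_subset_thickening hε _) ?_
    rwa [thickening_closure]
  exact mem_extSet hR hA' (isPreconnected_range γ.continuous) hγA' ⟨1, γ.target⟩ hvR ⟨0, γ.source⟩

theorem stmt1 (A : Set ℂ) (hA : Bornology.IsBounded A) (δ : ℝ) (hδ : 0 < δ) :
    ∃ ε : ℝ, 0 < ε ∧ ∀ A' : Set ℂ, Bornology.IsBounded A' → dHLt A A' ε →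
      extSet A ⊆ Metric.thickening δ (extSet A') := by
  obtain ⟨C, hC0, hC⟩ := hA.exists_pos_norm_le
  have hR : 0 < C + 1 := by linarith
  have htb : TotallyBounded (extSet A ∩ closedBall 0 (C + 1)) :=
    (isCompact_closedBall (0 : ℂ) (C + 1)).totallyBounded.subset inter_subset_right
  obtain ⟨t, htA, htfin, htcov⟩ := finite_approx_of_totallyBounded htb δ hδ
  have hex : ∀ w ∈ t, ∃ ε : ℝ, 0 < ε ∧ ∀ A' : Set ℂ, {z : ℂ | C + 1 < ‖z‖} ⊆ (closure A')ᶜ →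
      closure A' ⊆ thickening ε A → w ∈ extSet A' :=
    fun w hw => exists_thickening_mem_extSet hR (htA hw).1
  choose! e he0 he using hex
  obtain ⟨ε, hε0, hε1, hεt⟩ : ∃ ε : ℝ, 0 < ε ∧ ε ≤ 1 ∧ ∀ w ∈ t, ε ≤ e w := by
    have h1 : ∀ᶠ ε : ℝ in nhdsWithin 0 (Ioi 0), ∀ w ∈ t, ε ≤ e w :=
      (eventually_all_finite htfin).mpr fun w hw =>
        nhdsWithin_le_nhds (eventually_le_nhds (he0 w hw))
    have h2 : ∀ᶠ ε : ℝ in nhdsWithin 0 (Ioi 0), ε ≤ 1 := nhdsWithin_le_nhds (eventually_le_nhds one_pos)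
    obtain ⟨ε, ⟨h1, h2⟩, h0⟩ := ((h1.and h2).and self_mem_nhdsWithin).exists
    exact ⟨ε, h0, h2, h1⟩
  refine ⟨ε, hε0, ?_⟩
  rintro A' - ⟨η, hη0, hηε, -, hsub⟩ z hz
  -- The strict inequality `η < ε` absorbs the passage to the closure of `A'`.
  have hcl : closure A' ⊆ thickening ε A :=
    (closure_mono hsub).trans ((closure_thickening_subset_cthickening η A).trans
      (cthickening_subset_thickening' hε0 hηε A))
  have hfar : {z : ℂ | C + 1 < ‖z‖} ⊆ (closure A')ᶜ := by
    intro x hx hxA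
    obtain ⟨y, hy, hxy⟩ := mem_thickening_iff.mp (hcl hxA)
    rw [dist_eq_norm] at hxy
    have := norm_sub_norm_le x y
    have := hC y hy
    rw [mem_ofPred_eq] at hx
    linarith
  rw [mem_thickening_iff]
  rcases lt_or_ge (C + 1) ‖z‖ with hzR | hzR
  · exact ⟨z, mem_extSet hR hfar (isPreconnected_norm_gt hR) hfar hzR hzR hzR, by simpa using hδ⟩
  · obtain ⟨w, hw, hzw⟩ := mem_iUnion₂.mp (htcov ⟨hz, by simpa using hzR⟩)
    exact ⟨w, he w hw A' hfar (hcl.trans (thickening_mono (hεt w hw) A)), hzw⟩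
end
end

section
/- Let A, A' be bounded subsets of ℂ and let δ > 0. If d_H(A, A') < δ and Ext A ⊆ (Ext A')^δ, then ∂_o A ⊆ (∂_o A')^{2δ} and Hull A' ⊆ (Hull A)^{2δ}. (Lemma lem:helpfulinclusions of the paper.) -/
/-!
The lemma is an elementary consequence of two facts. First, `∂_o A ⊆ closure A`: components of an
open subset of `ℂ` are open, so off `closure A` membership in `Ext A` is locally constant
(`outerBoundary_subset_closure`), while `A` is disjoint from `Ext A`. Second, a ball containing both
a point of `Ext A'` and a point outside it meets `∂_o A'`, because balls are connected
(`ball_meets_outerBoundary`).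

*Outer boundaries.* A point `x ∈ ∂_o A` is a limit of points of `Ext A`, hence near `Ext A'`, and a
limit of points of `A`, hence near `A' ⊆ Hull A'`. Thus the ball of radius `2δ` about `x` meets
`∂_o A'`.

*Hulls.* If `x ∈ Hull A'` lies in `Ext A`, then some point of `Ext A'` is within `δ` of `x`, so
some point of `∂_o A' ⊆ closure A'` is within `δ` of `x`, and that point is within `δ` of
`A ⊆ Hull A`.
-/

open Filter Set MeasureTheory ProbabilityTheory Metric Bornology

noncomputable section

lemma subset_hullSet (A : Set ℂ) : A ⊆ hullSet A := by
  intro x hx h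
  apply h
  rw [connectedComponentIn_eq_empty (notMem_compl_iff.2 (subset_closure hx))]
  exact Bornology.isBounded_empty

/-- Off `closure A`, membership in `Ext A` is constant on the (open) component of each point. -/
lemma outerBoundary_subset_closure (A : Set ℂ) : outerBoundary A ⊆ closure A := by
  intro x hx
  by_contra hxA
  have hxU : x ∈ (closure A)ᶜ := hxA
  have hC : IsOpen (connectedComponentIn (closure A)ᶜ x) :=
    isClosed_closure.isOpen_compl.connectedComponentIn
  have hxC := mem_connectedComponentIn hxU
  have key : ∀ y ∈ connectedComponentIn (closure A)ᶜ x, (y ∈ extSet A ↔ x ∈ extSet A) := by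
    intro y hy
    simp only [extSet, mem_ofPred_eq, connectedComponentIn_eq hy]
  obtain ⟨y, hyC, hyE⟩ := mem_closure_iff.1 (frontier_subset_closure hx) _ hC hxC
  obtain ⟨z, hzC, hzE⟩ := mem_closure_iff.1 (frontier_eq_closure_inter_closure.subset hx).2 _ hC hxC
  exact hzE ((key z hzC).2 ((key y hyC).1 hyE))

lemma ball_meets_outerBoundary {A : Set ℂ} {x y z : ℂ} {r : ℝ} (hy : y ∈ extSet A)
    (hz : z ∉ extSet A) (hxy : dist x y < r) (hxz : dist x z < r) :
    x ∈ Metric.thickening r (outerBoundary A) := by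
  by_contra hcon
  -- Otherwise the two disjoint open sets `interior (Ext A)` and `interior (Hull A)` cover the ball.
  have hcover : ∀ w ∈ ball x r, w ∈ interior (extSet A) ∨ w ∈ interior (extSet A)ᶜ := by
    intro w hw
    by_contra! hn
    refine hcon (Metric.mem_thickening_iff.2 ⟨w, ⟨?_, hn.1⟩, mem_ball'.1 hw⟩)
    simpa [interior_compl] using hn.2
  have hyB : y ∈ ball x r := mem_ball'.2 hxy
  have hzB : z ∈ ball x r := mem_ball'.2 hxz
  obtain ⟨w, -, hwE, hwH⟩ := (convex_ball x r).isPreconnected _ _ isOpen_interior isOpen_interior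
    hcover ⟨y, hyB, (hcover y hyB).resolve_right fun h => interior_subset h hy⟩
    ⟨z, hzB, (hcover z hzB).resolve_left fun h => hz (interior_subset h)⟩
  exact interior_subset hwH (interior_subset hwE)

theorem stmt2 (A A' : Set ℂ) (hA : Bornology.IsBounded A) (hA' : Bornology.IsBounded A')
    (δ : ℝ) (hδ : 0 < δ) (h1 : dHLt A A' δ)
    (h2 : extSet A ⊆ Metric.thickening δ (extSet A')) :
    outerBoundary A ⊆ Metric.thickening (2 * δ) (outerBoundary A') ∧
      hullSet A' ⊆ Metric.thickening (2 * δ) (hullSet A) := by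
  obtain ⟨ε, hε, hεδ, hAA', hA'A⟩ := h1
  constructor
  · intro x hx
    obtain ⟨y, hy, hxy⟩ := Metric.mem_closure_iff.1 (frontier_subset_closure hx) δ hδ
    obtain ⟨z, hz, hyz⟩ := Metric.mem_thickening_iff.1 (h2 hy)
    obtain ⟨a, ha, hxa⟩ := Metric.mem_closure_iff.1 (outerBoundary_subset_closure A hx) δ hδ
    obtain ⟨a', ha', haa'⟩ := Metric.mem_thickening_iff.1 (hAA' ha)
    refine ball_meets_outerBoundary hz (subset_hullSet A' ha') ?_ ?_
    · linarith [dist_triangle x y z]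
    · linarith [dist_triangle x a a']
  · intro x hx
    by_cases hxA : x ∈ extSet A
    · obtain ⟨y, hy, hxy⟩ := Metric.mem_thickening_iff.1 (h2 hxA)
      obtain ⟨w, hw, hxw⟩ := Metric.mem_thickening_iff.1
        (ball_meets_outerBoundary hy hx hxy (by simpa using hδ))
      -- The gap `δ - ε` pays for replacing `w ∈ closure A'` by a point of `A'`.
      obtain ⟨a', ha', hwa'⟩ := Metric.mem_closure_iff.1 (outerBoundary_subset_closure A' hw)
        (δ - ε) (sub_pos.2 hεδ)
      obtain ⟨a, ha, ha'a⟩ := Metric.mem_thickening_iff.1 (hA'A ha')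
      refine Metric.mem_thickening_iff.2 ⟨a, subset_hullSet A ha, ?_⟩
      linarith [dist_triangle x w a, dist_triangle w a' a]
    · exact Metric.self_subset_thickening (by positivity) _ hxA
end
end

section
/- Let (A_N)_{N∈ℕ} and A be bounded subsets of ℂ such that d_H(A_N, A) → 0 as N → ∞. Suppose that for every δ > 0 there exists N₀ such that for all N > N₀ one has Ext A_N ⊆ (Ext A)^δ. Then d_H(Ext A_N, Ext A) → 0, d_H(∂_o A_N, ∂_o A) → 0, and d_H(Hull A_N, Hull A) → 0 as N → ∞. (Proposition prop:topological of the paper.) -/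
/-!
The exterior is stable under Hausdorff perturbation in the following one-sided sense
(`eventually_subset_extSet`): every compact subset of `Ext A₀` lies in `Ext A_N` for large `N`.
A point `x ∈ Ext A₀` is joined inside `Ext A₀` to a far away point by a path; the path is at positive
distance from `A₀`, so it avoids `closure A_N` for large `N`, and far away points lie in `Ext A_N`
because they are the origin of a ray avoiding a fixed large ball.

* `Ext A₀ ⊆ (Ext A_N)^δ`: apply stability to a finite `δ`-net of the bounded part of `Ext A₀`.
* `Hull A_N ⊆ (Hull A₀)^δ`: apply stability to the bounded part of the set of points at distance at
  least `δ` from `Hull A₀`.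
* `Hull A₀ ⊆ (Hull A_N)^δ`: if `z ∈ Hull A₀` is at distance at least `δ` from `Hull A_N`, then
  `B(z; δ)` avoids `A_N`, so a slightly smaller ball avoids `closure A₀`, hence lies entirely in
  `Hull A₀`. But `z ∈ Ext A_N` is close to `Ext A₀` by hypothesis, a contradiction.
* Outer boundaries: two sets that are close and whose complements are close have close frontiers,
  since a ball meeting a set and its complement meets its frontier.
-/

open Filter Set MeasureTheory ProbabilityTheory Metric Bornology

noncomputable section

/-- Belonging to the exterior propagates along connected sets avoiding `closure A`. -/
lemma subset_extSet {A S : Set ℂ} {y : ℂ} (hS : IsPreconnected S) (hSA : S ⊆ (closure A)ᶜ)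
    (hyS : y ∈ S) (hy : y ∈ extSet A) : S ⊆ extSet A := by
  intro x hx
  have hsub := hS.subset_connectedComponentIn hyS hSA
  have h := connectedComponentIn_eq (hsub hx)
  simp only [extSet, mem_ofPred_eq] at hy ⊢
  rwa [← h]

lemma extSet_subset (A : Set ℂ) : extSet A ⊆ (closure A)ᶜ := by
  intro x hx
  by_contra h
  exact hx (by rw [connectedComponentIn_eq_empty h]; exact isBounded_empty)

lemma far_mem_extSet {A : Set ℂ} {R : ℝ} (hR : 0 ≤ R) (hA : A ⊆ closedBall 0 R) {z : ℂ}
    (hz : R < ‖z‖) : z ∈ extSet A := by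
  -- The ray from `z` away from the origin is connected, unbounded and avoids `closure A`.
  let S : Set ℂ := (fun t : ℝ => (t : ℂ) * z) '' Ici 1
  have hS : IsPreconnected S := isPreconnected_Ici.image _ (by fun_prop)
  have hSA : S ⊆ (closure A)ᶜ := by
    rintro _ ⟨t, ht, rfl⟩ hmem
    have h1 := closure_minimal hA isClosed_closedBall hmem
    have ht' : (1 : ℝ) ≤ t := ht
    rw [mem_closedBall_zero_iff, norm_mul, Complex.norm_real, Real.norm_of_nonneg (by linarith)] at h1
    nlinarith
  have hzS : z ∈ S := ⟨1, by simp, by simp⟩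
  intro hb
  obtain ⟨M, hM⟩ := (hb.subset (hS.subset_connectedComponentIn hzS hSA)).exists_norm_le
  have hz0 : 0 < ‖z‖ := lt_of_le_of_lt hR hz
  have hmem : ((1 + |M| / ‖z‖ : ℝ) : ℂ) * z ∈ S :=
    ⟨1 + |M| / ‖z‖, by simp only [mem_Ici]; have : 0 ≤ |M| / ‖z‖ := by positivity
                       linarith, rfl⟩
  have h2 := hM _ hmem
  rw [norm_mul, Complex.norm_real, Real.norm_of_nonneg (by positivity), add_mul, one_mul,
    div_mul_cancel₀ _ hz0.ne'] at h2
  linarith [le_abs_self M]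

/-- Compact sets disjoint from `closure A₀` have a neighbourhood eventually disjoint from
`closure (A N)`. -/
lemma eventually_avoid {A : ℕ → Set ℂ} {A₀ : Set ℂ}
    (hconv : ∀ δ : ℝ, 0 < δ → ∀ᶠ N in atTop, A N ⊆ thickening δ A₀)
    {P : Set ℂ} (hP : IsCompact P) (hPA : P ⊆ (closure A₀)ᶜ) :
    ∃ r : ℝ, 0 < r ∧ ∀ᶠ N in atTop, thickening r P ⊆ (closure (A N))ᶜ := by
  have hd : Disjoint P (closure A₀) := disjoint_left.2 fun x hx => hPA hx
  obtain ⟨r, hr, hdr⟩ := hd.exists_thickenings hP isClosed_closure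
  refine ⟨r, hr, (hconv r hr).mono fun N hN => ?_⟩
  have hdis : Disjoint (thickening r P) (A N) :=
    hdr.mono_right (hN.trans (thickening_subset_of_subset r subset_closure))
  exact subset_compl_iff_disjoint_right.2 (hdis.closure_right isOpen_thickening)

lemma eventually_ball_subset_extSet {A : ℕ → Set ℂ} {A₀ : Set ℂ}
    (hconv : ∀ δ : ℝ, 0 < δ → ∀ᶠ N in atTop, A N ⊆ thickening δ A₀)
    {R : ℝ} (hR : 0 ≤ R) (hb : ∀ᶠ N in atTop, A N ⊆ closedBall 0 R)
    {x : ℂ} (hx : x ∈ extSet A₀) :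
    ∃ r : ℝ, 0 < r ∧ ∀ᶠ N in atTop, ball x r ⊆ extSet (A N) := by
  set C := connectedComponentIn (closure A₀)ᶜ x with hC
  have hxF : x ∈ (closure A₀)ᶜ := extSet_subset _ hx
  have hxC : x ∈ C := mem_connectedComponentIn hxF
  have hCo : IsOpen C := isClosed_closure.isOpen_compl.connectedComponentIn
  have hCc : IsConnected C := isConnected_connectedComponentIn_iff.2 hxF
  obtain ⟨y, hyC, hy⟩ : ∃ y ∈ C, R < ‖y‖ := by
    by_contra! h
    exact hx (isBounded_iff_forall_norm_le.2 ⟨R, h⟩)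
  obtain ⟨γ, hγ⟩ := (hCo.isConnected_iff_isPathConnected.1 hCc).joinedIn x hxC y hyC
  have hPA : range γ ⊆ (closure A₀)ᶜ := by
    rintro _ ⟨t, rfl⟩
    exact connectedComponentIn_subset _ _ (hγ t)
  obtain ⟨r, hr, hev⟩ := eventually_avoid hconv (isCompact_range γ.continuous) hPA
  have hxP : x ∈ range γ := ⟨0, γ.source⟩
  refine ⟨r, hr, (hev.and hb).mono fun N hN => ?_⟩
  have h1 : range γ ⊆ extSet (A N) :=
    subset_extSet (isPreconnected_range γ.continuous)
      ((self_subset_thickening hr _).trans hN.1) ⟨1, γ.target⟩ (far_mem_extSet hR hN.2 hy)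
  exact subset_extSet (convex_ball x r).isPreconnected
    ((ball_subset_thickening hxP r).trans hN.1) (mem_ball_self hr) (h1 hxP)

/-- Stability: a compact subset of `Ext A₀` is eventually contained in `Ext (A N)`. -/
lemma eventually_subset_extSet {A : ℕ → Set ℂ} {A₀ : Set ℂ}
    (hconv : ∀ δ : ℝ, 0 < δ → ∀ᶠ N in atTop, A N ⊆ thickening δ A₀)
    {R : ℝ} (hR : 0 ≤ R) (hb : ∀ᶠ N in atTop, A N ⊆ closedBall 0 R)
    {K : Set ℂ} (hK : IsCompact K) (hKA : K ⊆ extSet A₀) :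
    ∀ᶠ N in atTop, K ⊆ extSet (A N) := by
  refine hK.induction_on (p := fun S => ∀ᶠ N in atTop, S ⊆ extSet (A N)) ?_ ?_ ?_ ?_
  · simp
  · exact fun s t hst ht => ht.mono fun N hN => hst.trans hN
  · exact fun s t hs ht => (hs.and ht).mono fun N hN => union_subset hN.1 hN.2
  · intro x hx
    obtain ⟨r, hr, h⟩ := eventually_ball_subset_extSet hconv hR hb (hKA hx)
    exact ⟨ball x r, mem_nhdsWithin_of_mem_nhds (ball_mem_nhds x hr), h⟩

lemma inter_frontier_nonempty_of_isPreconnected {S E : Set ℂ} (hS : IsPreconnected S)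
    (h1 : (S ∩ E).Nonempty) (h2 : (S ∩ Eᶜ).Nonempty) : (S ∩ frontier E).Nonempty := by
  by_contra h
  have hdis : ∀ x ∈ S, x ∉ frontier E := fun x hx hxE => h ⟨x, hx, hxE⟩
  -- Off the frontier, every point is interior to `E` or to its complement.
  have hin : ∀ x ∈ S, x ∈ E → x ∈ interior E := fun x hx hxE => by
    by_contra hi
    exact hdis x hx ⟨subset_closure hxE, hi⟩
  have hout : ∀ x ∈ S, x ∈ Eᶜ → x ∈ interior Eᶜ := fun x hx hxE => by
    by_contra hi
    exact hdis x hx (frontier_compl E ▸ ⟨subset_closure hxE, hi⟩)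
  obtain ⟨a, ha, haE⟩ := h1
  obtain ⟨b, hb, hbE⟩ := h2
  obtain ⟨c, -, hc1, hc2⟩ := hS _ _ isOpen_interior isOpen_interior
    (fun x hx => (em (x ∈ E)).imp (hin x hx) (hout x hx))
    ⟨a, ha, hin a ha haE⟩ ⟨b, hb, hout b hb hbE⟩
  exact interior_subset hc2 (interior_subset hc1)

lemma frontier_subset_thickening {E E' : Set ℂ} {ε δ : ℝ} (hεδ : ε < δ)
    (h1 : E ⊆ thickening ε E') (h2 : Eᶜ ⊆ thickening ε E'ᶜ) :
    frontier E ⊆ thickening δ (frontier E') := by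
  intro z hz
  -- A point of `closure F` is within `δ` of any set whose `ε`-thickening contains `F`.
  have key : ∀ F F' : Set ℂ, F ⊆ thickening ε F' → z ∈ closure F →
      (ball z δ ∩ F').Nonempty := by
    intro F F' hF hzF
    obtain ⟨w, hw, hzw⟩ := Metric.mem_closure_iff.1 hzF (δ - ε) (by linarith)
    obtain ⟨v, hv, hwv⟩ := mem_thickening_iff.1 (hF hw)
    refine ⟨v, ?_, hv⟩
    rw [mem_ball, dist_comm]
    linarith [dist_triangle z w v]
  rw [frontier_eq_closure_inter_closure] at hz
  have hE := key E E' h1 hz.1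
  obtain ⟨v, hv, hvE⟩ := key Eᶜ E'ᶜ h2 hz.2
  obtain ⟨w, hw, hwF⟩ : (ball z δ ∩ frontier E').Nonempty :=
    inter_frontier_nonempty_of_isPreconnected (convex_ball z δ).isPreconnected hE ⟨v, hv, hvE⟩
  exact mem_thickening_iff.2 ⟨w, hwF, by rwa [dist_comm]⟩

lemma extSet_subset_thickening {A : ℕ → Set ℂ} {A₀ : Set ℂ}
    (hconv : ∀ δ : ℝ, 0 < δ → ∀ᶠ N in atTop, A N ⊆ thickening δ A₀)
    {R : ℝ} (hR : 0 ≤ R) (hb : ∀ᶠ N in atTop, A N ⊆ closedBall 0 R) {δ : ℝ} (hδ : 0 < δ) :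
    ∀ᶠ N in atTop, extSet A₀ ⊆ thickening δ (extSet (A N)) := by
  have htb : TotallyBounded (extSet A₀ ∩ closedBall 0 R) :=
    (isCompact_closedBall (0 : ℂ) R).totallyBounded.subset inter_subset_right
  obtain ⟨t, hts, htf, hcov⟩ := totallyBounded_iff_subset.1 htb _ (dist_mem_uniformity hδ)
  filter_upwards [hb, eventually_subset_extSet hconv hR hb htf.isCompact
    (hts.trans inter_subset_left)] with N hN htN x hx
  by_cases hxR : R < ‖x‖
  · exact self_subset_thickening hδ _ (far_mem_extSet hR hN hxR)
  · obtain ⟨y, hy, hxy⟩ := mem_iUnion₂.1 (hcov ⟨hx, by simpa using hxR⟩)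
    exact mem_thickening_iff.2 ⟨y, htN hy, hxy⟩

lemma hullSet_subset_thickening {A : ℕ → Set ℂ} {A₀ : Set ℂ}
    (hconv : ∀ δ : ℝ, 0 < δ → ∀ᶠ N in atTop, A N ⊆ thickening δ A₀)
    {R : ℝ} (hR : 0 ≤ R) (hb : ∀ᶠ N in atTop, A N ⊆ closedBall 0 R) {δ : ℝ} (hδ : 0 < δ) :
    ∀ᶠ N in atTop, hullSet (A N) ⊆ thickening δ (hullSet A₀) := by
  have hK : IsCompact (closedBall (0 : ℂ) R ∩ (thickening δ (hullSet A₀))ᶜ) :=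
    (isCompact_closedBall 0 R).inter_right isOpen_thickening.isClosed_compl
  have hKA : closedBall (0 : ℂ) R ∩ (thickening δ (hullSet A₀))ᶜ ⊆ extSet A₀ := by
    rintro x ⟨-, hx⟩
    by_contra h
    exact hx (self_subset_thickening hδ _ h)
  filter_upwards [hb, eventually_subset_extSet hconv hR hb hK hKA] with N hN hKN x hx
  by_contra h
  have hxR : ‖x‖ ≤ R := by
    by_contra! h'
    exact hx (far_mem_extSet hR hN h')
  exact hx (hKN ⟨by simpa using hxR, h⟩)

/-- The inclusion that uses the hypothesis on the exteriors of the approximating sets. -/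
lemma hullSet_subset_thickening' {B A₀ : Set ℂ} {δ : ℝ} (hδ : 0 < δ)
    (hA : A₀ ⊆ thickening (δ / 2) B) (hE : extSet B ⊆ thickening (δ / 2) (extSet A₀)) :
    hullSet A₀ ⊆ thickening δ (hullSet B) := by
  intro z hz
  by_contra h
  have hball : ball z δ ⊆ extSet B := by
    intro w hw
    by_contra hwB
    exact h (mem_thickening_iff.2 ⟨w, hwB, by rwa [dist_comm]⟩)
  have hdis : Disjoint (ball z (δ / 2)) A₀ := by
    refine disjoint_left.2 fun w hw hwA => ?_
    obtain ⟨v, hv, hwv⟩ := mem_thickening_iff.1 (hA hwA)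
    refine extSet_subset B (hball (?_ : v ∈ ball z δ)) (subset_closure hv)
    rw [mem_ball] at hw ⊢
    linarith [dist_triangle v w z, dist_comm v w]
  obtain ⟨y, hy, hzy⟩ := mem_thickening_iff.1 (hE (hball (mem_ball_self hδ)))
  exact hz (subset_extSet (convex_ball z (δ / 2)).isPreconnected
    (subset_compl_iff_disjoint_right.2 (hdis.closure_right isOpen_ball))
    (mem_ball'.2 hzy) hy (mem_ball_self (by linarith)))

theorem stmt3 (A : ℕ → Set ℂ) (A₀ : Set ℂ)
    (hA : ∀ N, Bornology.IsBounded (A N)) (hA₀ : Bornology.IsBounded A₀)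
    (hconv : ∀ δ : ℝ, 0 < δ → ∀ᶠ N in Filter.atTop, dHLt (A N) A₀ δ)
    (hext : ∀ δ : ℝ, 0 < δ → ∃ N₀ : ℕ, ∀ N > N₀,
      extSet (A N) ⊆ Metric.thickening δ (extSet A₀)) :
    (∀ δ : ℝ, 0 < δ → ∀ᶠ N in Filter.atTop, dHLt (extSet (A N)) (extSet A₀) δ) ∧
    (∀ δ : ℝ, 0 < δ → ∀ᶠ N in Filter.atTop, dHLt (outerBoundary (A N)) (outerBoundary A₀) δ) ∧
    (∀ δ : ℝ, 0 < δ → ∀ᶠ N in Filter.atTop, dHLt (hullSet (A N)) (hullSet A₀) δ) := by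
  have hc1 : ∀ δ : ℝ, 0 < δ → ∀ᶠ N in atTop, A N ⊆ thickening δ A₀ := fun δ hδ =>
    (hconv δ hδ).mono fun N ⟨ε, _, hε, h, _⟩ => h.trans (thickening_mono hε.le _)
  have hc2 : ∀ δ : ℝ, 0 < δ → ∀ᶠ N in atTop, A₀ ⊆ thickening δ (A N) := fun δ hδ =>
    (hconv δ hδ).mono fun N ⟨ε, _, hε, _, h⟩ => h.trans (thickening_mono hε.le _)
  have hE1 : ∀ δ : ℝ, 0 < δ → ∀ᶠ N in atTop, extSet (A N) ⊆ thickening δ (extSet A₀) := by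
    intro δ hδ
    obtain ⟨N₀, hN₀⟩ := hext δ hδ
    exact (eventually_gt_atTop N₀).mono hN₀
  obtain ⟨R, hR0, hR⟩ : ∃ R : ℝ, 0 ≤ R ∧ thickening 1 A₀ ⊆ closedBall 0 R := by
    obtain ⟨R, hR⟩ := (hA₀.thickening (δ := 1)).subset_closedBall (0 : ℂ)
    exact ⟨max R 0, le_max_right _ _, hR.trans (closedBall_subset_closedBall (le_max_left _ _))⟩
  have hb : ∀ᶠ N in atTop, A N ⊆ closedBall 0 R := (hc1 1 one_pos).mono fun N h => h.trans hR
  have hE2 := fun δ (hδ : 0 < δ) => extSet_subset_thickening hc1 hR0 hb hδ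
  have hH1 := fun δ (hδ : 0 < δ) => hullSet_subset_thickening hc1 hR0 hb hδ
  have hH2 : ∀ δ : ℝ, 0 < δ → ∀ᶠ N in atTop, hullSet A₀ ⊆ thickening δ (hullSet (A N)) :=
    fun δ hδ => ((hc2 _ (half_pos hδ)).and (hE1 _ (half_pos hδ))).mono fun N h =>
      hullSet_subset_thickening' hδ h.1 h.2
  refine ⟨fun δ hδ => ?_, fun δ hδ => ?_, fun δ hδ => ?_⟩
  · filter_upwards [hE1 _ (half_pos hδ), hE2 _ (half_pos hδ)] with N h1 h2
    exact ⟨δ / 2, half_pos hδ, half_lt_self hδ, h1, h2⟩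
  · have hδ4 : 0 < δ / 4 := by linarith
    filter_upwards [hE1 _ hδ4, hE2 _ hδ4, hH1 _ hδ4, hH2 _ hδ4] with N h1 h2 h3 h4
    exact ⟨δ / 2, half_pos hδ, half_lt_self hδ,
      frontier_subset_thickening (by linarith) h1 h3,
      frontier_subset_thickening (by linarith) h2 h4⟩
  · filter_upwards [hH1 _ (half_pos hδ), hH2 _ (half_pos hδ)] with N h1 h2
    exact ⟨δ / 2, half_pos hδ, half_lt_self hδ, h1, h2⟩
end
end

section
/- Let γ_N, γ be curves such that d_∞(γ_N, γ) → 0 as N → ∞, and suppose γ has no touchings (i.e., no pair (s,t) is a touching of γ). Then, identifying each curve with its range, d_H(Ext γ_N, Ext γ) → 0, d_H(∂_o γ_N, ∂_o γ) → 0, and d_H(Hull γ_N, Hull γ) → 0 as N → ∞. (Theorem thm:curveconv of the paper.) -/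
/-!
The only hard inclusion is that exterior points of `γ_N` are close to the exterior of `γ`; the
other exterior inclusion is a compactness argument, and closeness of the hulls and outer boundaries
follows formally from closeness of the ranges and of the exteriors, as a ball that meets an exterior
and its complement contains a point of the outer boundary.

For the hard inclusion, complementary components are detected by logarithms. If `x` is an exterior
point of a compact set `K`, then `z - x` has a continuous logarithm on `K`
(`exists_log_of_mem_extSet`). If `x` is interior to a bounded set `U`, it has none on `∂U`
(`no_log_on_frontier`). Let `x` be an exterior point of `γ_N` whose `δ`-neighbourhood lies in the
hull of `γ`. The logarithm on `γ_N` induces a logarithm along the part of `γ` outside `B(x; δ)`,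
parametrised by time. It takes the same value at two times `s`, `t` with `γ(s) = γ(t)`: as `(s, t)`
is not a touching, `γ_N` meets itself near these times and close to that point, so both values are
continuations, inside a disc not containing `x`, of one value at the meeting point
(`transfer_log`). How large `N` must be is uniform in `(s, t)` by compactness
(`exists_uniform_meetsNear`). Thus `z - x` has a continuous logarithm on `γ \ B(x; δ)`, which
contains the boundary of the hull of `γ`, although `x` is interior to the hull: a contradiction.
-/

open Filter Set MeasureTheory ProbabilityTheory Metric Bornology

noncomputable section

/-- A curve: a continuous function `γ : [0, t_γ] → ℂ` with finite time length `t_γ`. -/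
structure Curve where
  len : ℝ
  len_nonneg : 0 ≤ len
  toFun : ℝ → ℂ
  cont : ContinuousOn toFun (Set.Icc 0 len)

namespace Curve

/-- The range of a curve, viewed as a subset of the plane. -/
def range (γ : Curve) : Set ℂ := γ.toFun '' Set.Icc 0 γ.len

/-- `d_∞(γ, γ') = sup_{s ∈ [0,1]} |γ(s t_γ) − γ'(s t_{γ'})| + |t_γ − t_{γ'}|`. -/
def dInf (γ γ' : Curve) : ℝ :=
  (⨆ s : Set.Icc (0:ℝ) 1, dist (γ.toFun ((s : ℝ) * γ.len)) (γ'.toFun ((s : ℝ) * γ'.len)))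
    + |γ.len - γ'.len|

/-- The left endpoint `s⁻` of the largest subinterval `(s⁻, s⁺)` of `[0, γ'.len]` with
`s⁻ ≤ s ≤ s⁺` on whose interior `γ'` stays in the ball `B(c; δ)`. -/
def maxIntLo (γ' : Curve) (c : ℂ) (δ s : ℝ) : ℝ :=
  sSup ({0} ∪ {a | a ∈ Set.Icc 0 s ∧ γ'.toFun a ∉ Metric.ball c δ})

/-- The right endpoint `s⁺` of the largest subinterval `(s⁻, s⁺)` of `[0, γ'.len]` with
`s⁻ ≤ s ≤ s⁺` on whose interior `γ'` stays in the ball `B(c; δ)`. -/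
def maxIntHi (γ' : Curve) (c : ℂ) (δ s : ℝ) : ℝ :=
  sInf ({γ'.len} ∪ {b | b ∈ Set.Icc s γ'.len ∧ γ'.toFun b ∉ Metric.ball c δ})

/-- Definition of a touching `(s, t)` of a curve `γ`. -/
def HasTouching (γ : Curve) (s t : ℝ) : Prop :=
  0 ≤ s ∧ s < t ∧ t ≤ γ.len ∧ γ.toFun s = γ.toFun t ∧
  ∃ δ : ℝ, 0 < δ ∧ ∀ ε ∈ Set.Ioo (0:ℝ) δ, ∃ γ' : Curve, γ'.len = γ.len ∧ dInf γ γ' < ε ∧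
    γ'.toFun '' Set.Icc (maxIntLo γ' (γ.toFun s) δ s) (maxIntHi γ' (γ.toFun s) δ s) ∩
      γ'.toFun '' Set.Icc (maxIntLo γ' (γ.toFun t) δ t) (maxIntHi γ' (γ.toFun t) δ t) = ∅

/-- A curve has no touchings if no pair `(s, t)` is a touching of it. -/
def HasNoTouchings (γ : Curve) : Prop := ∀ s t : ℝ, ¬ γ.HasTouching s t

end Curve

/-! ### Logarithms of `z - x` and the exterior -/

/-- A continuous function on a connected set whose exponential is constant is itself constant,
since the fibres of `exp` are discrete. -/
lemma const_of_exp_const {S : Set ℝ} (hS : IsPreconnected S) {h : ℝ → ℂ}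
    (hc : ContinuousOn h S) {c : ℂ} (he : ∀ u ∈ S, Complex.exp (h u) = c) {s t : ℝ}
    (hs : s ∈ S) (ht : t ∈ S) : h s = h t := by
  have hdisc : IsDiscrete (Complex.exp ⁻¹' {c}) := by
    rw [← he s hs]
    exact ⟨(Complex.isCoveringMapOn_exp (Complex.exp (h s)) (by simp)).discreteTopology_fiber⟩
  exact hS.constant_of_mapsTo hdisc hc (fun u hu => he u hu) hs ht

/-- If `x` is interior to a bounded set `U`, then `z - x` has no continuous logarithm on `∂U`.
Otherwise a Tietze extension of the logarithm over `U` would give a nonvanishing function on the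
plane that equals `z - x` off `U`, hence a continuous argument on a large circle around `x`. -/
lemma no_log_on_frontier {U : Set ℂ} (hUb : IsBounded U) {x : ℂ} (hx : x ∈ interior U)
    {l : ℂ → ℂ} (hl : ContinuousOn l (frontier U))
    (he : ∀ z ∈ frontier U, Complex.exp (l z) = z - x) : False := by
  classical
  obtain ⟨l', hl'⟩ := ContinuousMap.exists_restrict_eq (isClosed_frontier (s := U))
    (⟨(frontier U).domRestrict l, hl.domRestrict⟩ : C(frontier U, ℂ))
  have hl'e : ∀ z ∈ frontier U, Complex.exp (l' z) = z - x := by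
    intro z hz
    rw [← he z hz]
    exact congrArg Complex.exp (DFunLike.congr_fun hl' ⟨z, hz⟩)
  let F : ℂ → ℂ := U.piecewise (fun z => Complex.exp (l' z)) (fun z => z - x)
  have hF : Continuous F := by
    apply continuous_piecewise
    · exact hl'e
    · exact (Complex.continuous_exp.comp l'.continuous).continuousOn
    · exact (continuous_id.sub continuous_const).continuousOn
  have hF0 : ∀ z, F z ≠ 0 := by
    intro z
    by_cases hz : z ∈ U
    · simp [F, hz]
    · simp only [F, hz, not_false_eq_true, piecewise_eq_of_notMem]
      intro h
      rw [sub_eq_zero] at h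
      exact hz (h ▸ interior_subset hx)
  obtain ⟨R, hR0, hR⟩ : ∃ R : ℝ, 0 < R ∧ ∀ z, dist z x = R → z ∉ U := by
    obtain ⟨R, hR⟩ := hUb.subset_ball x
    refine ⟨max R 1, by positivity, fun z hz hzU => ?_⟩
    have := mem_ball.1 (hR hzU)
    have := le_max_left R 1
    linarith
  -- The plane is simply connected, so `F` lifts through the covering map `exp`.
  obtain ⟨G, ⟨-, hG⟩, -⟩ := Complex.isCoveringMapOn_exp.existsUnique_continuousMap_lifts
    (⟨F, hF⟩ : C(ℂ, ℂ)) (a₀ := 0) (e₀ := Complex.log (F 0)) (Complex.exp_log (hF0 0)) hF0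
  have hGe : ∀ z, Complex.exp (G z) = F z := fun z => congrFun hG z
  -- On a large circle around `x` the lift yields a continuous branch of the argument.
  let c : ℝ → ℂ := fun θ => x + R * Complex.exp (θ * Complex.I)
  have hcU : ∀ θ, c θ ∉ U := by
    intro θ
    apply hR
    simp [c, dist_eq_norm, Complex.norm_exp_ofReal_mul_I, abs_of_pos hR0]
  have h1 := const_of_exp_const (S := univ) isPreconnected_univ
    (h := fun θ => G (c θ) - θ * Complex.I) (c := (R : ℂ)) (by fun_prop)
    (fun θ _ => by
      rw [Complex.exp_sub, hGe]
      simp only [F, hcU θ, not_false_eq_true, piecewise_eq_of_notMem]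
      simp [c]) (mem_univ 0) (mem_univ (2 * Real.pi))
  have hc2 : c (2 * Real.pi) = c 0 := by
    simp [c, Complex.exp_two_pi_mul_I]
  simp only [hc2] at h1
  have : (2 * Real.pi : ℂ) * Complex.I = 0 := by
    push_cast at h1
    linear_combination h1
  exact Complex.two_pi_I_ne_zero this

/-- Points of one connected subset of the complement lie in the exterior simultaneously. -/
lemma mem_extSet_iff_of_isPreconnected {A S : Set ℂ} (hS : IsPreconnected S)
    (hSA : S ⊆ (closure A)ᶜ) {x y : ℂ} (hx : x ∈ S) (hy : y ∈ S) :
    x ∈ extSet A ↔ y ∈ extSet A := by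
  have : connectedComponentIn (closure A)ᶜ x = connectedComponentIn (closure A)ᶜ y :=
    connectedComponentIn_eq (hS.subset_connectedComponentIn hx hSA hy)
  simp only [extSet, mem_ofPred_eq, this]

lemma exists_ball_extSet_iff {A : Set ℂ} {x : ℂ} (hx : x ∉ closure A) :
    ∃ r > 0, ∀ y ∈ ball x r, (x ∈ extSet A ↔ y ∈ extSet A) := by
  obtain ⟨r, hr, h⟩ := Metric.isOpen_iff.1 isClosed_closure.isOpen_compl x hx
  exact ⟨r, hr, fun y hy => mem_extSet_iff_of_isPreconnected (convex_ball x r).isPreconnected h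
    (mem_ball_self hr) hy⟩

lemma isOpen_extSet (A : Set ℂ) : IsOpen (extSet A) := by
  rw [Metric.isOpen_iff]
  intro x hx
  obtain ⟨r, hr, h⟩ := exists_ball_extSet_iff (extSet_subset A hx)
  exact ⟨r, hr, fun y hy => (h y hy).1 hx⟩

lemma frontier_extSet_subset (A : Set ℂ) : frontier (extSet A) ⊆ closure A := by
  intro x hx
  by_contra h
  obtain ⟨r, hr, h⟩ := exists_ball_extSet_iff h
  have hx' : x ∉ extSet A := by
    rw [(isOpen_extSet A).frontier_eq] at hx
    exact hx.2
  obtain ⟨y, hy, hyx⟩ := Metric.mem_closure_iff.1 (frontier_subset_closure hx) r hr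
  exact hx' ((h y (by rwa [mem_ball, dist_comm])).2 hy)

/-- Points far away from `A` are joined to infinity by a ray avoiding `A`. -/
lemma mem_extSet_of_far {A : Set ℂ} {R : ℝ} (hR : 0 ≤ R) (hA : closure A ⊆ closedBall 0 R) {z : ℂ}
    (hz : R < ‖z‖) : z ∈ extSet A := by
  have hray : (fun t : ℝ => (t : ℂ) * z) '' Ici 1 ⊆ connectedComponentIn (closure A)ᶜ z := by
    apply IsPreconnected.subset_connectedComponentIn
    · exact isPreconnected_Ici.image _ (by fun_prop)
    · exact ⟨1, by simp, by simp⟩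
    · rintro _ ⟨t, ht, rfl⟩ h
      have h2 := hA h
      simp only [mem_closedBall, dist_zero_right, norm_mul, Complex.norm_real,
        Real.norm_eq_abs] at h2
      have h3 : 1 ≤ |t| := le_trans ht (le_abs_self t)
      nlinarith
  intro hb
  obtain ⟨M, hM⟩ := (hb.subset hray).exists_norm_le
  have hM1 := hM _ ⟨1, by simp, rfl⟩
  simp only [Complex.ofReal_one, one_mul] at hM1
  have hz0 : 0 < ‖z‖ := lt_of_le_of_lt hR hz
  have hM0 : 0 ≤ M := le_trans hz0.le hM1
  have := hM _ ⟨M / ‖z‖ + 1, by simp; positivity, rfl⟩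
  simp only [norm_mul, Complex.norm_real, Real.norm_eq_abs] at this
  rw [abs_of_nonneg (by positivity), add_mul, div_mul_cancel₀ _ hz0.ne'] at this
  linarith

/-- A property that is locally constant off `closure A` and holds near infinity holds on the
exterior of `A`. -/
lemma extSet_induction {A : Set ℂ} {P : ℂ → Prop}
    (hloc : ∀ x ∉ closure A, ∃ r > 0, ∀ y ∈ ball x r, (P x ↔ P y))
    {R : ℝ} (hfar : ∀ z, R < ‖z‖ → P z) {x : ℂ} (hx : x ∈ extSet A) : P x := by
  set C := connectedComponentIn (closure A)ᶜ x with hC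
  obtain ⟨z, hzC, hz⟩ : ∃ z ∈ C, R < ‖z‖ := by
    by_contra! h
    exact hx (isBounded_iff_forall_norm_le.2 ⟨R, h⟩)
  by_contra hPx
  have hCp : IsPreconnected C := isPreconnected_connectedComponentIn
  have hCs : C ⊆ (closure A)ᶜ := connectedComponentIn_subset _ _
  have hop : ∀ Q : ℂ → Prop, (∀ x ∉ closure A, ∃ r > 0, ∀ y ∈ ball x r, (Q x → Q y)) →
      IsOpen {y | y ∈ (closure A)ᶜ ∧ Q y} := by
    intro Q hQ
    rw [Metric.isOpen_iff]
    rintro y ⟨hy, hQy⟩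
    obtain ⟨r, hr, h⟩ := hQ y hy
    obtain ⟨r', hr', h'⟩ := Metric.isOpen_iff.1 isClosed_closure.isOpen_compl y hy
    exact ⟨min r r', lt_min hr hr', fun w hw => ⟨h' (ball_subset_ball (min_le_right _ _) hw),
      h w (ball_subset_ball (min_le_left _ _) hw) hQy⟩⟩
  have h1 := hop P fun x hx => (hloc x hx).imp fun r h => ⟨h.1, fun y hy => (h.2 y hy).1⟩
  have h2 := hop (fun y => ¬ P y) fun x hx =>
    (hloc x hx).imp fun r h => ⟨h.1, fun y hy => mt (h.2 y hy).2⟩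
  obtain ⟨w, -, hw1, hw2⟩ := hCp _ _ h1 h2
    (fun y hy => (em (P y)).imp (fun h => ⟨hCs hy, h⟩) (fun h => ⟨hCs hy, h⟩))
    ⟨z, hzC, hCs hzC, hfar z hz⟩
    ⟨x, mem_connectedComponentIn (extSet_subset A hx), extSet_subset A hx, hPx⟩
  exact hw2.2 hw1.2

lemma slitPlane_of_norm_sub_lt {a b : ℂ} (h : ‖a - b‖ < ‖b‖) : a / b ∈ Complex.slitPlane := by
  have hb : b ≠ 0 := by
    rintro rfl
    simp at h
    exact absurd h (not_lt.2 (norm_nonneg _))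
  have : a / b = 1 + (a - b) / b := by field_simp; ring
  rw [this]
  apply Complex.mem_slitPlane_of_norm_lt_one
  rw [norm_div, div_lt_one (norm_pos_iff.2 hb)]
  exact h

/-- On a compact set `K`, `z - x` has a continuous logarithm for every exterior point `x`. -/
lemma exists_log_of_mem_extSet {K : Set ℂ} (hK : IsCompact K) {x : ℂ} (hx : x ∈ extSet K) :
    ∃ l : ℂ → ℂ, ContinuousOn l K ∧ ∀ z ∈ K, Complex.exp (l z) = z - x := by
  -- `y` and `x` being close, `(z - x) / (z - y)` avoids the cut of the principal logarithm.
  have step : ∀ x y : ℂ, (∀ z ∈ K, dist x y < dist z y) →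
      (∃ l : ℂ → ℂ, ContinuousOn l K ∧ ∀ z ∈ K, Complex.exp (l z) = z - y) →
      ∃ l : ℂ → ℂ, ContinuousOn l K ∧ ∀ z ∈ K, Complex.exp (l z) = z - x := by
    rintro x y hxy ⟨l, hl, he⟩
    have hne : ∀ z ∈ K, z - y ≠ 0 := fun z hz h => by
      rw [sub_eq_zero] at h
      have := hxy z hz
      rw [h, dist_self] at this
      exact absurd this (not_lt.2 dist_nonneg)
    have hs : ∀ z ∈ K, (z - x) / (z - y) ∈ Complex.slitPlane := fun z hz => by
      apply slitPlane_of_norm_sub_lt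
      have := hxy z hz
      rw [dist_comm x y, dist_eq_norm, dist_eq_norm] at this
      rwa [show z - x - (z - y) = y - x by ring]
    refine ⟨fun z => l z + Complex.log ((z - x) / (z - y)), hl.add ?_, fun z hz => ?_⟩
    · exact ContinuousOn.clog (ContinuousOn.div (by fun_prop) (by fun_prop) hne) hs
    · rw [Complex.exp_add, he z hz, Complex.exp_log (Complex.slitPlane_ne_zero (hs z hz)),
        mul_div_cancel₀ _ (hne z hz)]
  obtain ⟨R, hR⟩ := hK.isBounded.exists_norm_le
  refine extSet_induction (A := K) (R := R) (P := fun x => ∃ l : ℂ → ℂ, ContinuousOn l K ∧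
    ∀ z ∈ K, Complex.exp (l z) = z - x) ?_ ?_ hx
  · intro x hx
    obtain ⟨r, hr, h⟩ := Metric.isOpen_iff.1 isClosed_closure.isOpen_compl x hx
    have hd : ∀ z ∈ K, r ≤ dist z x := fun z hz => by
      by_contra! h'
      exact h h' (subset_closure hz)
    refine ⟨r / 2, by positivity, fun y hy => ⟨step y x ?_, step x y ?_⟩⟩
    · intro z hz
      have := hd z hz
      rw [mem_ball] at hy
      linarith
    · intro z hz
      have := hd z hz
      rw [mem_ball] at hy
      have := dist_triangle z y x
      rw [dist_comm x y]
      linarith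
  · intro z hz
    have h0 : ∀ w ∈ K, (w - z) / (-z) ∈ Complex.slitPlane := fun w hw => by
      apply slitPlane_of_norm_sub_lt
      simpa using lt_of_le_of_lt (hR w hw) hz
    have hz0 : K.Nonempty → z ≠ 0 := by
      rintro ⟨w, hw⟩ rfl
      have := h0 w hw
      simp at this
    refine ⟨fun w => Complex.log (-z) + Complex.log ((w - z) / (-z)),
      continuousOn_const.add (ContinuousOn.clog (by fun_prop) h0), fun w hw => ?_⟩
    have := neg_ne_zero.2 (hz0 ⟨w, hw⟩)
    rw [Complex.exp_add, Complex.exp_log this,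
      Complex.exp_log (Complex.slitPlane_ne_zero (h0 w hw)), mul_div_cancel₀ _ this]

/-! ### Robustness of the self-intersections of a curve without touchings -/

/-- The curve reparametrised linearly over `[0, 1]`; this also makes sense for length zero. -/
def Curve.unit (γ : Curve) (u : ℝ) : ℂ := γ.toFun (u * γ.len)

lemma Curve.mul_len_mem (γ : Curve) {u : ℝ} (hu : u ∈ Icc (0 : ℝ) 1) :
    u * γ.len ∈ Icc 0 γ.len :=
  ⟨mul_nonneg hu.1 γ.len_nonneg, mul_le_of_le_one_left γ.len_nonneg hu.2⟩

lemma Curve.unit_cont (γ : Curve) : ContinuousOn γ.unit (Icc 0 1) :=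
  γ.cont.comp (by fun_prop) (fun _ hu => γ.mul_len_mem hu)

lemma Curve.range_eq (γ : Curve) : γ.range = γ.unit '' Icc 0 1 := by
  apply Subset.antisymm
  · rintro _ ⟨a, ha, rfl⟩
    rcases γ.len_nonneg.eq_or_lt with h | h
    · refine ⟨0, by simp, ?_⟩
      rw [← h] at ha
      have : a = 0 := le_antisymm ha.2 ha.1
      simp [Curve.unit, this]
    · exact ⟨a / γ.len, ⟨div_nonneg ha.1 h.le, (div_le_one h).2 ha.2⟩, by
        rw [Curve.unit, div_mul_cancel₀ _ h.ne']⟩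
  · rintro _ ⟨u, hu, rfl⟩
    exact ⟨_, γ.mul_len_mem hu, rfl⟩

lemma Curve.isCompact_range (γ : Curve) : IsCompact γ.range :=
  isCompact_Icc.image_of_continuousOn γ.cont

/-- The supremum in `dInf` is over a bounded family, so it is a genuine upper bound. -/
lemma Curve.dist_unit_le (γ γ' : Curve) {u : ℝ} (hu : u ∈ Icc (0 : ℝ) 1) :
    dist (γ.unit u) (γ'.unit u) ≤ Curve.dInf γ γ' := by
  have hb : BddAbove (Set.range fun s : Icc (0 : ℝ) 1 =>
      dist (γ.toFun ((s : ℝ) * γ.len)) (γ'.toFun ((s : ℝ) * γ'.len))) := by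
    have := (isCompact_Icc (a := (0 : ℝ)) (b := 1)).bddAbove_image
      (continuous_dist.comp_continuousOn (γ.unit_cont.prodMk γ'.unit_cont))
    rwa [image_eq_range] at this
  exact (le_ciSup hb ⟨u, hu⟩).trans (le_add_of_nonneg_right (abs_nonneg _))

/-- On the interval `[s⁻, s⁺]` the curve stays in the closed ball. -/
lemma Curve.dist_le_of_mem_maxInt (γ : Curve) {c : ℂ} {δ s : ℝ} (hs : s ∈ Icc 0 γ.len)
    (hc : dist (γ.toFun s) c ≤ δ) {u : ℝ}
    (hu : u ∈ Icc (γ.maxIntLo c δ s) (γ.maxIntHi c δ s)) :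
    u ∈ Icc 0 γ.len ∧ dist (γ.toFun u) c ≤ δ := by
  set lo := γ.maxIntLo c δ s with hlo
  set hi := γ.maxIntHi c δ s with hhi
  have hbl : BddAbove ({0} ∪ {a | a ∈ Icc 0 s ∧ γ.toFun a ∉ ball c δ}) :=
    ⟨s, by rintro a (rfl | ha); exacts [hs.1, ha.1.2]⟩
  have hbh : BddBelow ({γ.len} ∪ {b | b ∈ Icc s γ.len ∧ γ.toFun b ∉ ball c δ}) :=
    ⟨s, by rintro a (rfl | ha); exacts [hs.2, ha.1.1]⟩
  have hlo0 : 0 ≤ lo := le_csSup hbl (Or.inl rfl)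
  have hhil : hi ≤ γ.len := csInf_le hbh (Or.inl rfl)
  have hu0 : u ∈ Icc 0 γ.len := ⟨hlo0.trans hu.1, hu.2.trans hhil⟩
  refine ⟨hu0, ?_⟩
  have hl : ∀ v ∈ Ioc lo s, dist (γ.toFun v) c ≤ δ := by
    intro v hv
    by_contra! h
    exact absurd (le_csSup hbl (Or.inr ⟨⟨hlo0.trans hv.1.le, hv.2⟩, fun h' => h.not_gt h'⟩))
      (not_le.2 hv.1)
  have hr : ∀ v ∈ Ico s hi, dist (γ.toFun v) c ≤ δ := by
    intro v hv
    by_contra! h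
    exact absurd (csInf_le hbh (Or.inr ⟨⟨hv.1, hv.2.le.trans hhil⟩, fun h' => h.not_gt h'⟩))
      (not_le.2 hv.2)
  have key : ∀ S : Set ℝ, closure S ⊆ Icc 0 γ.len → (∀ v ∈ S, dist (γ.toFun v) c ≤ δ) →
      u ∈ closure S → dist (γ.toFun u) c ≤ δ := by
    intro S hS h huS
    have := MapsTo.closure_of_continuousOn (t := closedBall c δ) h (γ.cont.mono hS)
    rw [isClosed_closedBall.closure_eq] at this
    exact this huS
  rcases lt_trichotomy u s with h | h | h
  · have hcl := closure_Ioc (hu.1.trans_lt h).ne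
    exact key (Ioc lo s) (hcl ▸ Icc_subset_Icc hlo0 hs.2) hl (hcl ▸ ⟨hu.1, h.le⟩)
  · rwa [h]
  · have hcl := closure_Ico (h.trans_le hu.2).ne
    exact key (Ico s hi) (hcl ▸ Icc_subset_Icc hs.1 hhil) hr (hcl ▸ ⟨h.le, hu.2⟩)

lemma Curve.mem_maxInt (γ : Curve) {c : ℂ} {δ s : ℝ} (hs : s ∈ Icc 0 γ.len) :
    s ∈ Icc (γ.maxIntLo c δ s) (γ.maxIntHi c δ s) :=
  ⟨csSup_le ⟨0, Or.inl rfl⟩ (by rintro a (rfl | ha); exacts [hs.1, ha.1.2]),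
    le_csInf ⟨_, Or.inl rfl⟩ (by rintro a (rfl | ha); exacts [hs.2, ha.1.1])⟩

/-- The path `g`, parametrised over `[0, 1]`, meets itself at times `s₁` and `t₁` that can be
reached from `s` and `t` respectively while `g` stays within distance `η` of `p`. No order between
`s` and `s₁`, or between `t` and `t₁`, is prescribed. -/
def MeetsNear (g : ℝ → ℂ) (p : ℂ) (η s t : ℝ) : Prop :=
  ∃ s₁ ∈ Icc (0 : ℝ) 1, ∃ t₁ ∈ Icc (0 : ℝ) 1, g s₁ = g t₁ ∧
    (∀ u ∈ uIcc s s₁, dist (g u) p < η) ∧ ∀ u ∈ uIcc t t₁, dist (g u) p < η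

lemma MeetsNear.symm {g : ℝ → ℂ} {p : ℂ} {η s t : ℝ} (h : MeetsNear g p η s t) :
    MeetsNear g p η t s := by
  obtain ⟨s₁, hs, t₁, ht, he, h1, h2⟩ := h
  exact ⟨t₁, ht, s₁, hs, he.symm, h2, h1⟩

/-- At a fixed self-intersection which is not a touching, paths close enough to the curve still
meet themselves. -/
lemma meetsNear_of_not_touching {γ : Curve} (hno : γ.HasNoTouchings) {η : ℝ} (hη : 0 < η)
    {s t : ℝ} (hs : s ∈ Icc (0 : ℝ) 1) (ht : t ∈ Icc (0 : ℝ) 1) (hst : γ.unit s = γ.unit t) :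
    ∃ ε > 0, ∀ g : ℝ → ℂ, ContinuousOn g (Icc 0 1) →
      (∀ u ∈ Icc (0 : ℝ) 1, dist (γ.unit u) (g u) < ε) → MeetsNear g (γ.unit s) η s t := by
  wlog hlt : s ≤ t generalizing s t
  · obtain ⟨ε, hε, h⟩ := this ht hs hst.symm (not_le.1 hlt).le
    exact ⟨ε, hε, fun g hg hd => hst ▸ (h g hg hd).symm⟩
  rcases hlt.eq_or_lt with rfl | hlt
  · exact ⟨η, hη, fun g hg hd => ⟨s, hs, s, hs, rfl, by
      simpa [dist_comm] using hd s hs, by simpa [dist_comm] using hd s hs⟩⟩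
  rcases γ.len_nonneg.eq_or_lt with h0 | hL
  -- A curve of length zero is constant.
  · refine ⟨η, hη, fun g hg hd => ⟨s, hs, s, hs, rfl, ?_, ?_⟩⟩ <;>
    · intro u hu
      have hu' : u ∈ Icc (0 : ℝ) 1 := by
        refine (convex_Icc (0 : ℝ) 1).ordConnected.uIcc_subset ?_ hs hu
        assumption
      have := hd u hu'
      rw [dist_comm] at this
      simpa [Curve.unit, ← h0] using this
  have hn := hno (s * γ.len) (t * γ.len)
  have hsL := γ.mul_len_mem hs
  have htL := γ.mul_len_mem ht
  obtain ⟨ε, ⟨hε0, hεη⟩, hε⟩ : ∃ ε ∈ Ioo (0 : ℝ) (η / 2), ∀ γ' : Curve, γ'.len = γ.len →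
      Curve.dInf γ γ' < ε →
      (γ'.toFun '' Icc (γ'.maxIntLo (γ.unit s) (η / 2) (s * γ.len))
          (γ'.maxIntHi (γ.unit s) (η / 2) (s * γ.len)) ∩
        γ'.toFun '' Icc (γ'.maxIntLo (γ.unit t) (η / 2) (t * γ.len))
          (γ'.maxIntHi (γ.unit t) (η / 2) (t * γ.len))).Nonempty := by
    by_contra! h
    exact hn ⟨hsL.1, mul_lt_mul_of_pos_right hlt hL, htL.2, hst, η / 2, by positivity, h⟩
  refine ⟨ε / 2, by positivity, fun g hg hd => ?_⟩
  let γ' : Curve := ⟨γ.len, γ.len_nonneg, fun a => g (a / γ.len), hg.comp (by fun_prop)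
    fun a ha => ⟨div_nonneg ha.1 hL.le, (div_le_one hL).2 ha.2⟩⟩
  have hγ' : ∀ u, γ'.toFun (u * γ.len) = g u := fun u => by
    simp [γ', mul_div_cancel_right₀ _ hL.ne']
  have hdist : Curve.dInf γ γ' < ε := by
    have : Curve.dInf γ γ' ≤ ε / 2 + |γ.len - γ'.len| := by
      refine add_le_add_left (ciSup_le fun u => ?_) _
      have := (hd u u.2).le
      rwa [← hγ'] at this
    simp only [γ', sub_self, abs_zero] at this
    linarith
  obtain ⟨_, ⟨a, ha, rfl⟩, ⟨b, hb, hab⟩⟩ := hε γ' rfl hdist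
  have aux : ∀ {v a : ℝ}, v ∈ Icc (0 : ℝ) 1 → γ.unit s = γ.unit v →
      a ∈ Icc (γ'.maxIntLo (γ.unit v) (η / 2) (v * γ.len))
          (γ'.maxIntHi (γ.unit v) (η / 2) (v * γ.len)) →
      a / γ.len ∈ Icc (0 : ℝ) 1 ∧ ∀ u ∈ uIcc v (a / γ.len), dist (g u) (γ.unit s) < η := by
    intro v a hv hsv ha
    have hvL : v * γ.len ∈ Icc 0 γ'.len := γ.mul_len_mem hv
    have hball : dist (γ'.toFun (v * γ.len)) (γ.unit v) ≤ η / 2 := by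
      rw [hγ', dist_comm]
      linarith [hd v hv]
    have haL := (γ'.dist_le_of_mem_maxInt hvL hball ha).1
    refine ⟨⟨div_nonneg haL.1 hL.le, (div_le_one hL).2 haL.2⟩, fun u hu => ?_⟩
    have huL : u * γ.len ∈ uIcc (v * γ.len) a := by
      have := mem_image_of_mem (fun x => x * γ.len) hu
      rw [image_mul_const_uIcc, div_mul_cancel₀ _ hL.ne'] at this
      exact this
    have := (γ'.dist_le_of_mem_maxInt hvL hball
      (ordConnected_Icc.uIcc_subset (γ'.mem_maxInt hvL) ha huL)).2
    rw [hγ', ← hsv] at this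
    linarith
  obtain ⟨ha1, ha2⟩ := aux hs rfl ha
  obtain ⟨hb1, hb2⟩ := aux ht hst hb
  exact ⟨a / γ.len, ha1, b / γ.len, hb1, hab.symm, ha2, hb2⟩

/-- By compactness the closeness required in `meetsNear_of_not_touching` may be chosen uniformly
over all self-intersections. -/
lemma exists_uniform_meetsNear {γ : Curve} (hno : γ.HasNoTouchings) {η : ℝ} (hη : 0 < η) :
    ∃ ε > 0, ∀ g : ℝ → ℂ, ContinuousOn g (Icc 0 1) →
      (∀ u ∈ Icc (0 : ℝ) 1, dist (γ.unit u) (g u) < ε) →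
      ∀ s ∈ Icc (0 : ℝ) 1, ∀ t ∈ Icc (0 : ℝ) 1, γ.unit s = γ.unit t →
        MeetsNear g (γ.unit s) η s t := by
  obtain ⟨r, hr, huc⟩ := Metric.uniformContinuousOn_iff.1
    (isCompact_Icc.uniformContinuousOn_of_continuous γ.unit_cont) (η / 4) (by positivity)
  let E : Set (ℝ × ℝ) := {q | q ∈ Icc (0 : ℝ) 1 ×ˢ Icc (0 : ℝ) 1 ∧ γ.unit q.1 = γ.unit q.2}
  have hE : TotallyBounded E :=
    (isCompact_Icc.prod isCompact_Icc).totallyBounded.subset fun q hq => hq.1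
  obtain ⟨F, hFE, hF, hcov⟩ := Metric.finite_approx_of_totallyBounded hE r hr
  have hloc : ∀ q : ℝ × ℝ, ∃ ε > 0, q ∈ E → ∀ g : ℝ → ℂ, ContinuousOn g (Icc 0 1) →
      (∀ u ∈ Icc (0 : ℝ) 1, dist (γ.unit u) (g u) < ε) →
      MeetsNear g (γ.unit q.1) (η / 4) q.1 q.2 := by
    intro q
    by_cases hq : q ∈ E
    · obtain ⟨ε, hε, h⟩ := meetsNear_of_not_touching hno (η := η / 4) (by positivity)
        hq.1.1 hq.1.2 hq.2
      exact ⟨ε, hε, fun _ => h⟩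
    · exact ⟨1, one_pos, fun h => absurd h hq⟩
  choose e he hmeet using hloc
  obtain ⟨ε, hε, hεF⟩ : ∃ ε > 0, ∀ q ∈ F, ε ≤ e q := by
    rcases F.eq_empty_or_nonempty with rfl | hne
    · exact ⟨1, one_pos, by simp⟩
    · obtain ⟨q, -, hq⟩ := F.exists_min_image e hF hne
      exact ⟨e q, he q, hq⟩
  refine ⟨min ε (η / 4), lt_min hε (by positivity), fun g hg hd s hs t ht hst => ?_⟩
  obtain ⟨q, hqF, hq⟩ := mem_iUnion₂.1 (hcov (show (s, t) ∈ E from ⟨⟨hs, ht⟩, hst⟩))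
  have hqE := hFE hqF
  rw [mem_ball, Prod.dist_eq, max_lt_iff] at hq
  have hsp : dist (γ.unit s) (γ.unit q.1) < η / 4 := huc s hs _ hqE.1.1 hq.1
  obtain ⟨s₁, hs₁, t₁, ht₁, he₁, h1, h2⟩ := hmeet q hqE g hg fun u hu =>
    (hd u hu).trans_le ((min_le_left _ _).trans (hεF q hqF))
  have aux : ∀ {v w v₁ : ℝ}, v ∈ Icc (0 : ℝ) 1 → w ∈ Icc (0 : ℝ) 1 → dist v w < r →
      γ.unit s = γ.unit v → (∀ u ∈ uIcc w v₁, dist (g u) (γ.unit q.1) < η / 4) →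
      ∀ u ∈ uIcc v v₁, dist (g u) (γ.unit s) < η := by
    intro v w v₁ hv hw hvw hsv h u hu
    rcases uIcc_subset_uIcc_union_uIcc (b := w) hu with hu | hu
    · have huI := (convex_Icc (0 : ℝ) 1).ordConnected.uIcc_subset hv hw hu
      have huv : dist u v < r := by
        refine lt_of_le_of_lt ?_ hvw
        rw [Real.dist_eq, Real.dist_eq, abs_sub_comm v w]
        exact abs_sub_left_of_mem_uIcc hu
      have h3 := huc u huI v hv huv
      have h4 := (hd u huI).trans_le (min_le_right _ _)
      rw [dist_comm] at h4
      rw [hsv]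
      linarith [dist_triangle (g u) (γ.unit u) (γ.unit v)]
    · have h3 := h u hu
      rw [dist_comm] at hsp
      linarith [dist_triangle (g u) (γ.unit q.1) (γ.unit s)]
  exact ⟨s₁, hs₁, t₁, ht₁, he₁, aux hs hqE.1.1 hq.1 rfl h1, aux ht hqE.1.2 hq.2 hst h2⟩

/-! ### Transferring logarithms and exteriors -/

/-- A function on the image of a compact set is continuous if its pullback is. -/
lemma continuousOn_image_of_comp {T : Set ℝ} (hT : IsCompact T) {f : ℝ → ℂ} {m : ℝ → ℂ}
    {l : ℂ → ℂ} (hf : ContinuousOn f T) (hm : ContinuousOn m T) (h : ∀ s ∈ T, l (f s) = m s) :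
    ContinuousOn l (f '' T) := by
  rw [continuousOn_iff_isClosed]
  intro C hC
  refine ⟨f '' (T ∩ m ⁻¹' C), ?_, ?_⟩
  · exact ((hT.of_isClosed_subset (hm.preimage_isClosed_of_isClosed hT.isClosed hC)
      inter_subset_left).image_of_continuousOn (hf.mono inter_subset_left)).isClosed
  · ext z
    constructor
    · rintro ⟨hz, s, hs, rfl⟩
      exact ⟨⟨s, ⟨hs, by rw [mem_preimage, ← h s hs]; exact hz⟩, rfl⟩, s, hs, rfl⟩
    · rintro ⟨⟨s, ⟨hs, hsC⟩, rfl⟩, hz⟩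
      exact ⟨by rw [mem_preimage, h s hs]; exact hsC, hz⟩

/-- A logarithm of `z - x` along `g` carries over to the part of a nearby curve that stays away
from `x`, because the self-intersections of the curve persist in `g` up to small detours. -/
lemma transfer_log {γ : Curve} {ρ : ℝ} (hρ : 0 < ρ) {g : ℝ → ℂ} (hg : ContinuousOn g (Icc 0 1))
    (hd : ∀ u ∈ Icc (0 : ℝ) 1, dist (γ.unit u) (g u) < ρ)
    (hmeet : ∀ s ∈ Icc (0 : ℝ) 1, ∀ t ∈ Icc (0 : ℝ) 1, γ.unit s = γ.unit t →
        MeetsNear g (γ.unit s) ρ s t) {x : ℂ} {l : ℂ → ℂ} (hl : ContinuousOn l (g '' Icc 0 1))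
    (he : ∀ z ∈ g '' Icc 0 1, Complex.exp (l z) = z - x) :
    ∃ l' : ℂ → ℂ, ContinuousOn l' (γ.range \ ball x (2 * ρ)) ∧
      ∀ z ∈ γ.range \ ball x (2 * ρ), Complex.exp (l' z) = z - x := by
  have hslit : ∀ {p w : ℂ}, 2 * ρ ≤ dist p x → dist p w < ρ →
      w - x ≠ 0 ∧ (p - x) / (w - x) ∈ Complex.slitPlane := by
    intro p w hp hw
    have h1 : ρ < ‖w - x‖ := by
      rw [← dist_eq_norm]
      linarith [dist_triangle p w x]
    refine ⟨norm_pos_iff.1 (hρ.trans h1), slitPlane_of_norm_sub_lt ?_⟩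
    rw [sub_sub_sub_cancel_right, ← dist_eq_norm]
    exact hw.trans h1
  have hlg : ContinuousOn (fun u => l (g u)) (Icc 0 1) :=
    hl.comp hg (fun u hu => mem_image_of_mem g hu)
  -- The candidate value at `p`, computed from the branch of `l` at the time `u`.
  let m : ℂ → ℝ → ℂ := fun p u => l (g u) + Complex.log ((p - x) / (g u - x))
  have hmexp : ∀ {p : ℂ} {u : ℝ}, u ∈ Icc (0 : ℝ) 1 → 2 * ρ ≤ dist p x → dist p (g u) < ρ →
      Complex.exp (m p u) = p - x := by
    intro p u hu hp hpu
    obtain ⟨h0, h1⟩ := hslit hp hpu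
    rw [Complex.exp_add, he _ (mem_image_of_mem g hu),
      Complex.exp_log (Complex.slitPlane_ne_zero h1), mul_div_cancel₀ _ h0]
  have hconst : ∀ {p : ℂ} {v v₁ : ℝ}, v ∈ Icc (0 : ℝ) 1 → v₁ ∈ Icc (0 : ℝ) 1 →
      2 * ρ ≤ dist p x → (∀ u ∈ uIcc v v₁, dist (g u) p < ρ) → m p v = m p v₁ := by
    intro p v v₁ hv hv₁ hp h
    have hsub : uIcc v v₁ ⊆ Icc 0 1 := (convex_Icc (0 : ℝ) 1).ordConnected.uIcc_subset hv hv₁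
    have h' : ∀ u ∈ uIcc v v₁, dist p (g u) < ρ := fun u hu => by
      rw [dist_comm]
      exact h u hu
    refine const_of_exp_const (c := p - x) isPreconnected_uIcc ?_
      (fun u hu => hmexp (hsub hu) hp (h' u hu)) left_mem_uIcc right_mem_uIcc
    refine (hlg.mono hsub).add (ContinuousOn.clog (ContinuousOn.div continuousOn_const
      ((hg.mono hsub).sub continuousOn_const) ?_) ?_)
    exacts [fun u hu => (hslit hp (h' u hu)).1, fun u hu => (hslit hp (h' u hu)).2]
  let T : Set ℝ := Icc 0 1 ∩ γ.unit ⁻¹' (ball x (2 * ρ))ᶜ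
  have hT : IsCompact T := isCompact_Icc.of_isClosed_subset
    (γ.unit_cont.preimage_isClosed_of_isClosed isClosed_Icc isOpen_ball.isClosed_compl)
    inter_subset_left
  have hTd : ∀ s ∈ T, 2 * ρ ≤ dist (γ.unit s) x := fun s hs => not_lt.1 hs.2
  have himg : γ.range \ ball x (2 * ρ) = γ.unit '' T := by
    rw [γ.range_eq]
    ext z
    constructor
    · rintro ⟨⟨s, hs, rfl⟩, hz⟩
      exact ⟨s, ⟨hs, hz⟩, rfl⟩
    · rintro ⟨s, hs, rfl⟩
      exact ⟨⟨s, hs.1, rfl⟩, hs.2⟩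
  let τ : ℂ → ℝ := Function.invFunOn γ.unit T
  let l' : ℂ → ℂ := fun z => m z (τ z)
  have hl' : ∀ s ∈ T, l' (γ.unit s) = m (γ.unit s) s := by
    intro s hs
    have hτ : τ (γ.unit s) ∈ T := Function.invFunOn_mem ⟨s, hs, rfl⟩
    have hτe : γ.unit (τ (γ.unit s)) = γ.unit s := Function.invFunOn_eq ⟨s, hs, rfl⟩
    obtain ⟨t₁, ht₁, s₁, hs₁, hts, h1, h2⟩ := hmeet s hs.1 _ hτ.1 hτe.symm
    have h3 := hconst hs.1 ht₁ (hTd s hs) h1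
    have h4 := hconst hτ.1 hs₁ (hTd s hs) h2
    change m (γ.unit s) (τ (γ.unit s)) = _
    rw [h3, h4]
    simp only [m, hts]
  refine ⟨l', ?_, ?_⟩
  · rw [himg]
    have hTI : T ⊆ Icc 0 1 := inter_subset_left
    refine continuousOn_image_of_comp hT (γ.unit_cont.mono hTI)
      (m := fun s => m (γ.unit s) s) ?_ hl'
    refine (hlg.mono hTI).add (ContinuousOn.clog (ContinuousOn.div
      ((γ.unit_cont.mono hTI).sub continuousOn_const)
      ((hg.mono hTI).sub continuousOn_const) ?_) ?_)
    exacts [fun s hs => (hslit (hTd s hs) (hd s hs.1)).1,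
      fun s hs => (hslit (hTd s hs) (hd s hs.1)).2]
  · rw [himg]
    rintro _ ⟨s, hs, rfl⟩
    rw [hl' s hs]
    exact hmexp hs.1 (hTd s hs) (hd s hs.1)

lemma exists_far (γ : Curve) : ∃ R : ℝ, 0 ≤ R ∧ closure γ.range ⊆ closedBall 0 R := by
  obtain ⟨R, hR⟩ := γ.isCompact_range.isBounded.subset_closedBall 0
  exact ⟨max R 0, le_max_right _ _, closure_minimal
    (hR.trans (closedBall_subset_closedBall (le_max_left _ _))) isClosed_closedBall⟩

/-- Every exterior point of a path near a curve without touchings is near the exterior of the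
curve. -/
lemma extSet_subset_of_close {γ : Curve} (hno : γ.HasNoTouchings) {δ : ℝ} (hδ : 0 < δ) :
    ∃ ε > 0, ∀ g : ℝ → ℂ, ContinuousOn g (Icc 0 1) →
      (∀ u ∈ Icc (0 : ℝ) 1, dist (γ.unit u) (g u) < ε) →
      extSet (g '' Icc 0 1) ⊆ thickening δ (extSet γ.range) := by
  obtain ⟨ε, hε, h⟩ := exists_uniform_meetsNear hno (η := δ / 2) (by positivity)
  refine ⟨min ε (δ / 2), lt_min hε (by positivity), fun g hg hd x hx => ?_⟩
  by_contra hfar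
  have hball : ball x δ ⊆ hullSet γ.range := fun y hy hyE =>
    hfar (mem_thickening_iff.2 ⟨y, hyE, by rwa [dist_comm]⟩)
  have hxint : x ∈ interior (hullSet γ.range) :=
    mem_interior.2 ⟨_, hball, isOpen_ball, mem_ball_self hδ⟩
  obtain ⟨l, hl, he⟩ := exists_log_of_mem_extSet (isCompact_Icc.image_of_continuousOn hg) hx
  obtain ⟨l', hl', he'⟩ := transfer_log (γ := γ) (ρ := δ / 2) (by positivity) hg
    (fun u hu => (hd u hu).trans_le (min_le_right _ _))
    (h g hg fun u hu => (hd u hu).trans_le (min_le_left _ _)) hl he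
  have hsub : frontier (hullSet γ.range) ⊆ γ.range \ ball x (2 * (δ / 2)) := by
    intro z hz
    constructor
    · rw [hullSet, frontier_compl] at hz
      simpa [γ.isCompact_range.isClosed.closure_eq] using frontier_extSet_subset _ hz
    · intro hzb
      rw [mul_div_cancel₀ _ (two_ne_zero)] at hzb
      exact hz.2 (mem_interior.2 ⟨_, hball, isOpen_ball, hzb⟩)
  obtain ⟨R, hR0, hR⟩ := exists_far γ
  have hb : IsBounded (hullSet γ.range) := isBounded_iff_forall_norm_le.2 ⟨R, fun z hz => by
    by_contra! h
    exact hz (mem_extSet_of_far hR0 hR h)⟩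
  exact no_log_on_frontier hb hxint (hl'.mono hsub) fun z hz => he' z (hsub hz)

/-! ### Convergence of exteriors, hulls and outer boundaries -/

lemma eventually_dist_unit_lt {γN : ℕ → Curve} {γ : Curve}
    (hconv : Tendsto (fun N => Curve.dInf (γN N) γ) atTop (nhds 0)) {ε : ℝ} (hε : 0 < ε) :
    ∀ᶠ N in atTop, ∀ u ∈ Icc (0 : ℝ) 1, dist (γ.unit u) ((γN N).unit u) < ε := by
  filter_upwards [hconv.eventually_lt_const hε] with N hN u hu
  rw [dist_comm]
  exact ((γN N).dist_unit_le γ hu).trans_lt hN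

lemma eventually_range_close {γN : ℕ → Curve} {γ : Curve}
    (hconv : Tendsto (fun N => Curve.dInf (γN N) γ) atTop (nhds 0)) {ε : ℝ} (hε : 0 < ε) :
    ∀ᶠ N in atTop, (γN N).range ⊆ thickening ε γ.range ∧
      γ.range ⊆ thickening ε (γN N).range := by
  filter_upwards [eventually_dist_unit_lt hconv hε] with N hN
  rw [γ.range_eq, (γN N).range_eq]
  constructor
  · rintro _ ⟨u, hu, rfl⟩
    exact mem_thickening_iff.2 ⟨_, mem_image_of_mem _ hu, by rw [dist_comm]; exact hN u hu⟩
  · rintro _ ⟨u, hu, rfl⟩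
    exact mem_thickening_iff.2 ⟨_, mem_image_of_mem _ hu, hN u hu⟩

/-- A fixed exterior point of the limit curve is eventually an exterior point. -/
lemma eventually_mem_extSet_s4 {γN : ℕ → Curve} {γ : Curve}
    (hconv : Tendsto (fun N => Curve.dInf (γN N) γ) atTop (nhds 0)) {x : ℂ}
    (hx : x ∈ extSet γ.range) {R : ℝ} (hR : ∀ᶠ N in atTop, ∀ z, R < ‖z‖ →
      z ∈ extSet (γN N).range) : ∀ᶠ N in atTop, x ∈ extSet (γN N).range := by
  refine extSet_induction (A := γ.range) (R := R)
    (P := fun x => ∀ᶠ N in atTop, x ∈ extSet (γN N).range) ?_ ?_ hx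
  · intro x hx
    obtain ⟨r, hr, h⟩ := Metric.isOpen_iff.1 isClosed_closure.isOpen_compl x hx
    refine ⟨r / 2, by positivity, fun y hy => eventually_congr ?_⟩
    filter_upwards [eventually_range_close hconv (half_pos hr)] with N hN
    refine mem_extSet_iff_of_isPreconnected (convex_ball x (r / 2)).isPreconnected ?_
      (mem_ball_self (by positivity)) hy
    intro z hz hzN
    rw [(γN N).isCompact_range.isClosed.closure_eq] at hzN
    obtain ⟨w, hw, hzw⟩ := mem_thickening_iff.1 (hN.1 hzN)
    refine h (mem_ball.2 ?_) (subset_closure hw)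
    rw [mem_ball] at hz
    rw [dist_comm] at hzw
    linarith [dist_triangle w z x]
  · intro z hz
    filter_upwards [hR] with N hN using hN z hz

lemma eventually_extSet_subset {γN : ℕ → Curve} {γ : Curve}
    (hconv : Tendsto (fun N => Curve.dInf (γN N) γ) atTop (nhds 0)) {δ : ℝ} (hδ : 0 < δ) :
    ∀ᶠ N in atTop, extSet γ.range ⊆ thickening δ (extSet (γN N).range) := by
  obtain ⟨R, hR0, hR⟩ := exists_far γ
  have hfar : ∀ᶠ N in atTop, ∀ z, R + 1 < ‖z‖ → z ∈ extSet (γN N).range := by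
    filter_upwards [eventually_range_close hconv one_pos] with N hN z hz
    refine mem_extSet_of_far (R := R + 1) (by positivity)
      (closure_minimal (fun w hw => ?_) isClosed_closedBall) hz
    obtain ⟨v, hv, hwv⟩ := mem_thickening_iff.1 (hN.1 hw)
    have := hR (subset_closure hv)
    rw [mem_closedBall] at this ⊢
    linarith [dist_triangle w v 0]
  have htb : TotallyBounded (extSet γ.range ∩ closedBall 0 (R + 1)) :=
    (isCompact_closedBall 0 (R + 1)).totallyBounded.subset inter_subset_right
  obtain ⟨F, hFE, hF, hcov⟩ := Metric.finite_approx_of_totallyBounded htb δ hδ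
  have hFev : ∀ᶠ N in atTop, ∀ x ∈ F, x ∈ extSet (γN N).range :=
    (eventually_all_finite hF).2 fun x hx => eventually_mem_extSet_s4 hconv (hFE hx).1 hfar
  filter_upwards [hfar, hFev] with N hN hFN x hx
  by_cases hxR : R + 1 < ‖x‖
  · exact self_subset_thickening hδ _ (hN x hxR)
  · obtain ⟨y, hyF, hxy⟩ := mem_iUnion₂.1 (hcov ⟨hx, by simpa using hxR⟩)
    exact mem_thickening_iff.2 ⟨y, hFN y hyF, hxy⟩

/-- If a ball meets the exterior of `B` and its complement, it meets the outer boundary. -/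
lemma exists_outerBoundary {B : Set ℂ} {p q w : ℂ} {r : ℝ} (hq : q ∈ extSet B)
    (hw : w ∉ extSet B) (hpq : dist p q < r) (hpw : dist p w < r) :
    ∃ z ∈ outerBoundary B, dist p z < r := by
  by_contra! hno
  have hcov : ball p r ⊆ extSet B ∪ (closure (extSet B))ᶜ := by
    intro z hz
    by_contra h
    simp only [mem_union, mem_compl_iff, not_or, not_not] at h
    refine absurd (hno z ?_) (not_le.2 (by rwa [dist_comm]))
    rw [outerBoundary, (isOpen_extSet B).frontier_eq]
    exact ⟨h.2, h.1⟩
  have hwp : w ∈ ball p r := by rwa [mem_ball, dist_comm]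
  obtain ⟨z, -, hz1, hz2⟩ := (convex_ball p r).isPreconnected _ _ (isOpen_extSet B)
    isClosed_closure.isOpen_compl hcov ⟨q, by rwa [mem_ball, dist_comm], hq⟩
    ⟨w, hwp, (hcov hwp).resolve_left hw⟩
  exact hz2 (subset_closure hz1)

lemma outerBoundary_subset_range (γ : Curve) : outerBoundary γ.range ⊆ γ.range := fun z hz => by
  simpa [γ.isCompact_range.isClosed.closure_eq] using frontier_extSet_subset _ hz

/-- Closeness of the outer boundaries follows from closeness of the ranges and exteriors. -/
lemma outerBoundary_subset {γ γ' : Curve} {ε : ℝ}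
    (hr : γ.range ⊆ thickening ε γ'.range)
    (hE : extSet γ.range ⊆ thickening ε (extSet γ'.range)) :
    outerBoundary γ.range ⊆ thickening (2 * ε) (outerBoundary γ'.range) := by
  intro p hp
  obtain ⟨w, hw, hpw⟩ := mem_thickening_iff.1 (hr (outerBoundary_subset_range γ hp))
  have hε : 0 < ε := dist_nonneg.trans_lt hpw
  obtain ⟨y, hy, hpy⟩ := Metric.mem_closure_iff.1 (frontier_subset_closure hp) ε hε
  obtain ⟨q, hq, hyq⟩ := mem_thickening_iff.1 (hE hy)
  obtain ⟨z, hz, hpz⟩ := exists_outerBoundary (p := p) (r := 2 * ε) hq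
    (subset_hullSet _ hw) (by linarith [dist_triangle p y q]) (by linarith)
  exact mem_thickening_iff.2 ⟨z, hz, hpz⟩

/-- Closeness of the hulls follows from closeness of the ranges and exteriors. -/
lemma hullSet_subset {γ γ' : Curve} {ε : ℝ} (hε : 0 < ε)
    (hr : γ.range ⊆ thickening ε γ'.range)
    (hE : extSet γ'.range ⊆ thickening ε (extSet γ.range)) :
    hullSet γ.range ⊆ thickening (2 * ε) (hullSet γ'.range) := by
  intro p hp
  by_cases hp' : p ∈ hullSet γ'.range
  · exact self_subset_thickening (by positivity) _ hp'
  obtain ⟨q, hq, hpq⟩ := mem_thickening_iff.1 (hE (not_not.1 hp'))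
  obtain ⟨z, hz, hpz⟩ := exists_outerBoundary hq hp hpq (by rwa [dist_self])
  obtain ⟨w, hw, hzw⟩ := mem_thickening_iff.1 (hr (outerBoundary_subset_range γ hz))
  exact mem_thickening_iff.2 ⟨w, subset_hullSet _ hw, by linarith [dist_triangle p z w]⟩

theorem stmt4 (γN : ℕ → Curve) (γ : Curve)
    (hconv : Filter.Tendsto (fun N => Curve.dInf (γN N) γ) Filter.atTop (nhds 0))
    (hno : Curve.HasNoTouchings γ) :
    (∀ δ : ℝ, 0 < δ → ∀ᶠ N in Filter.atTop,
      dHLt (extSet (Curve.range (γN N))) (extSet γ.range) δ) ∧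
    (∀ δ : ℝ, 0 < δ → ∀ᶠ N in Filter.atTop,
      dHLt (outerBoundary (Curve.range (γN N))) (outerBoundary γ.range) δ) ∧
    (∀ δ : ℝ, 0 < δ → ∀ᶠ N in Filter.atTop,
      dHLt (hullSet (Curve.range (γN N))) (hullSet γ.range) δ) := by
  have hall : ∀ δ : ℝ, 0 < δ → ∀ᶠ N in atTop,
      ((γN N).range ⊆ thickening (δ / 4) γ.range ∧ γ.range ⊆ thickening (δ / 4) (γN N).range) ∧
      extSet (γN N).range ⊆ thickening (δ / 4) (extSet γ.range) ∧
      extSet γ.range ⊆ thickening (δ / 4) (extSet (γN N).range) := by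
    intro δ hδ
    have hδ' : 0 < δ / 4 := by positivity
    obtain ⟨ε, hε, h⟩ := extSet_subset_of_close hno hδ'
    filter_upwards [eventually_range_close hconv hδ', eventually_extSet_subset hconv hδ',
      eventually_dist_unit_lt hconv hε] with N h1 h2 h3
    refine ⟨h1, ?_, h2⟩
    rw [(γN N).range_eq]
    exact h _ (γN N).unit_cont h3
  refine ⟨fun δ hδ => ?_, fun δ hδ => ?_, fun δ hδ => ?_⟩ <;>
    filter_upwards [hall δ hδ] with N ⟨⟨hr1, hr2⟩, hE1, hE2⟩
  · exact ⟨δ / 4, by positivity, by linarith, hE1, hE2⟩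
  · exact ⟨2 * (δ / 4), by positivity, by linarith, outerBoundary_subset hr1 hE1,
      outerBoundary_subset hr2 hE2⟩
  · exact ⟨2 * (δ / 4), by positivity, by linarith, hullSet_subset (by positivity) hr1 hE2,
      hullSet_subset (by positivity) hr2 hE1⟩
end
end

section
/- Let γ_N, γ be curves of time length 1 such that d_∞(γ_N, γ) → 0 as N → ∞, and suppose γ has no touchings. Then for any δ > 0 and any s, t ∈ [0, 1] which are δ-connected in γ, there exists N₀ such that s, t are 4δ-connected in γ_N for all N > N₀. (Lemma lem:touchingconv of the paper.) -/
/-!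
Write `u ~ v` (`EvConn`) when, for all large `N`, the points `γ_N u` and `γ_N v` lie in the same
connected component of `γ_N ∩ B(x; r)`. On the times at which `γ` lies in `B(x; r)`, this is an
equivalence relation with two further properties:

* its classes are relatively open, since `γ_N` is uniformly close to `γ` and `γ` moves little in a
  short time (`eventually_evConn`);
* if `γ u = γ v` then `u ~ v`: as `(u, v)` is not a touching, the arcs of `γ_N` around `u` and `v`
  inside a small ball must meet (`evConn_of_eq`).

Let `K` be a closed ball inside `B(x; r)`. By the first property the set of times at which `γ` is
in `K` splits into two compact sets, the times `~ s` and the others. By the second property their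
images are disjoint; these images cover `γ ∩ K`, so a connected subset of `γ ∩ K` lies in one of
them. Hence `s ~ t` if `γ s` and `γ t` lie in the same component of `γ ∩ B(x; δ/2)`. The theorem
takes `r = 2δ`.
-/


open Filter Set MeasureTheory ProbabilityTheory Metric Bornology

noncomputable section

/-- Times `s, t` are `δ`-connected in a curve `γ` (of time length 1) if there is an open ball
`B` of diameter `δ` such that `γ(s)` and `γ(t)` lie in the same connected component of
`γ ∩ B` (the curve identified with its range). -/
def DeltaConnectedIn (δ : ℝ) (γ : Curve) (s t : ℝ) : Prop :=
  ∃ x : ℂ, γ.toFun t ∈ connectedComponentIn (Curve.range γ ∩ Metric.ball x (δ / 2)) (γ.toFun s)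

namespace Curve

lemma dInf_comm (γ γ' : Curve) : dInf γ γ' = dInf γ' γ := by
  unfold dInf
  simp only [dist_comm, abs_sub_comm]

/-- The supremum in `dInf` is over a bounded family, so for curves of time length `1` it really
bounds every pointwise distance. -/
lemma dist_le_dInf {γ γ' : Curve} (h : γ.len = 1) (h' : γ'.len = 1) {u : ℝ}
    (hu : u ∈ Icc (0:ℝ) 1) : dist (γ.toFun u) (γ'.toFun u) ≤ dInf γ γ' := by
  have hc := γ.cont
  have hc' := γ'.cont
  unfold dInf
  rw [h] at hc ⊢
  rw [h'] at hc' ⊢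
  simp only [mul_one, sub_self, abs_zero, add_zero]
  have hb : BddAbove (Set.range fun s : Icc (0:ℝ) 1 => dist (γ.toFun s) (γ'.toFun s)) := by
    have := isCompact_Icc.bddAbove_image
      (continuous_dist.comp_continuousOn (hc.prodMk hc'))
    rwa [image_eq_range] at this
  exact le_ciSup hb ⟨u, hu⟩

/-- Up to its left endpoint, the maximal interval around `s` is mapped to the closed ball. -/
lemma mem_closedBall_of_lo {γ : Curve} {c : ℂ} {δ s : ℝ} (hs : s ∈ Icc 0 γ.len)
    (hsb : γ.toFun s ∈ ball c δ) :
    0 ≤ maxIntLo γ c δ s ∧ maxIntLo γ c δ s ≤ s ∧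
      ∀ a ∈ Icc (maxIntLo γ c δ s) s, γ.toFun a ∈ closedBall c δ := by
  have hbdd : BddAbove ({0} ∪ {a | a ∈ Icc 0 s ∧ γ.toFun a ∉ ball c δ}) := by
    refine ⟨s, ?_⟩
    rintro a (rfl | ha)
    · exact hs.1
    · exact ha.1.2
  have h0 : 0 ≤ maxIntLo γ c δ s := le_csSup hbdd (Or.inl rfl)
  have hle : maxIntLo γ c δ s ≤ s := by
    refine csSup_le ⟨0, Or.inl rfl⟩ ?_
    rintro a (rfl | ha)
    · exact hs.1
    · exact ha.1.2
  have hIoc : ∀ a ∈ Ioc (maxIntLo γ c δ s) s, γ.toFun a ∈ ball c δ := by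
    intro a ha
    by_contra hn
    exact absurd (le_csSup hbdd (Or.inr ⟨⟨h0.trans ha.1.le, ha.2⟩, hn⟩)) (not_le.2 ha.1)
  refine ⟨h0, hle, fun a ha => ?_⟩
  rcases hle.eq_or_lt with he | hlt
  · rw [he, Icc_self] at ha
    rw [mem_singleton_iff.1 ha]
    exact ball_subset_closedBall hsb
  · have hcl : a ∈ closure (Ioc (maxIntLo γ c δ s) s) := by rwa [closure_Ioc hlt.ne]
    have hw : ContinuousWithinAt γ.toFun (Ioc (maxIntLo γ c δ s) s) a :=
      (γ.cont a ⟨h0.trans ha.1, ha.2.trans hs.2⟩).mono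
        fun b hb => ⟨h0.trans hb.1.le, hb.2.trans hs.2⟩
    exact closure_ball_subset_closedBall (hw.mem_closure hcl hIoc)

/-- Up to its right endpoint, the maximal interval around `s` is mapped to the closed ball. -/
lemma mem_closedBall_of_hi {γ : Curve} {c : ℂ} {δ s : ℝ} (hs : s ∈ Icc 0 γ.len)
    (hsb : γ.toFun s ∈ ball c δ) :
    maxIntHi γ c δ s ≤ γ.len ∧ s ≤ maxIntHi γ c δ s ∧
      ∀ a ∈ Icc s (maxIntHi γ c δ s), γ.toFun a ∈ closedBall c δ := by
  have hbdd : BddBelow ({γ.len} ∪ {b | b ∈ Icc s γ.len ∧ γ.toFun b ∉ ball c δ}) := by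
    refine ⟨s, ?_⟩
    rintro a (rfl | ha)
    · exact hs.2
    · exact ha.1.1
  have h0 : maxIntHi γ c δ s ≤ γ.len := csInf_le hbdd (Or.inl rfl)
  have hle : s ≤ maxIntHi γ c δ s := by
    refine le_csInf ⟨γ.len, Or.inl rfl⟩ ?_
    rintro a (rfl | ha)
    · exact hs.2
    · exact ha.1.1
  have hIco : ∀ a ∈ Ico s (maxIntHi γ c δ s), γ.toFun a ∈ ball c δ := by
    intro a ha
    by_contra hn
    exact absurd (csInf_le hbdd (Or.inr ⟨⟨ha.1, ha.2.le.trans h0⟩, hn⟩)) (not_le.2 ha.2)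
  refine ⟨h0, hle, fun a ha => ?_⟩
  rcases hle.eq_or_lt with he | hlt
  · rw [← he, Icc_self] at ha
    rw [mem_singleton_iff.1 ha]
    exact ball_subset_closedBall hsb
  · have hcl : a ∈ closure (Ico s (maxIntHi γ c δ s)) := by rwa [closure_Ico hlt.ne]
    have hw : ContinuousWithinAt γ.toFun (Ico s (maxIntHi γ c δ s)) a :=
      (γ.cont a ⟨hs.1.trans ha.1, ha.2.trans h0⟩).mono
        fun b hb => ⟨hs.1.trans hb.1, hb.2.le.trans h0⟩
    exact closure_ball_subset_closedBall (hw.mem_closure hcl hIco)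

lemma mem_component_of_arc {γ : Curve} {F : Set ℂ} {a b u v : ℝ} (ha : 0 ≤ a) (hb : b ≤ γ.len)
    (hF : ∀ w ∈ Icc a b, γ.toFun w ∈ F) (hu : u ∈ Icc a b) (hv : v ∈ Icc a b) :
    γ.toFun v ∈ connectedComponentIn (range γ ∩ F) (γ.toFun u) := by
  have hsub : Icc a b ⊆ Icc 0 γ.len := Icc_subset_Icc ha hb
  have hpre : IsPreconnected (γ.toFun '' Icc a b) := isPreconnected_Icc.image _ (γ.cont.mono hsub)
  refine hpre.subset_connectedComponentIn (mem_image_of_mem _ hu) ?_ (mem_image_of_mem _ hv)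
  rintro _ ⟨w, hw, rfl⟩
  exact ⟨mem_image_of_mem _ (hsub hw), hF w hw⟩

/-- The arc of `γ` over the maximal interval around `s` stays in the component of `γ s` in any
set containing the closed ball. -/
lemma mem_component_of_maxInt {γ : Curve} {c : ℂ} {δ s w : ℝ} {F : Set ℂ}
    (hs : s ∈ Icc 0 γ.len) (hsb : γ.toFun s ∈ ball c δ) (hF : closedBall c δ ⊆ F)
    (hw : w ∈ Icc (maxIntLo γ c δ s) (maxIntHi γ c δ s)) :
    γ.toFun w ∈ connectedComponentIn (range γ ∩ F) (γ.toFun s) := by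
  obtain ⟨hl0, hls, hl⟩ := mem_closedBall_of_lo hs hsb
  obtain ⟨hr0, hrs, hr⟩ := mem_closedBall_of_hi hs hsb
  refine mem_component_of_arc hl0 hr0 (fun a ha => hF ?_) ⟨hls, hrs⟩ hw
  rcases le_total a s with h | h
  · exact hl a ⟨ha.1, h⟩
  · exact hr a ⟨h, ha.2⟩

/-- For all large `N`, the points `γ_N u` and `γ_N v` lie in the same connected component of
`γ_N ∩ B(x; r)`. -/
def EvConn (γN : ℕ → Curve) (x : ℂ) (r u v : ℝ) : Prop :=
  ∀ᶠ N in atTop, (γN N).toFun v ∈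
    connectedComponentIn (range (γN N) ∩ ball x r) ((γN N).toFun u)

lemma EvConn.symm {γN : ℕ → Curve} {x : ℂ} {r u v : ℝ} (h : EvConn γN x r u v) :
    EvConn γN x r v u := by
  filter_upwards [h] with N hN
  rw [← connectedComponentIn_eq hN]
  exact mem_connectedComponentIn (connectedComponentIn_nonempty_iff.1 ⟨_, hN⟩)

lemma EvConn.trans {γN : ℕ → Curve} {x : ℂ} {r u v w : ℝ} (h : EvConn γN x r u v)
    (h' : EvConn γN x r v w) : EvConn γN x r u w := by
  filter_upwards [h, h'] with N hN hN'
  rwa [connectedComponentIn_eq hN]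

/-- The classes of `EvConn` are relatively open among the times at which `γ` is in the ball. -/
lemma eventually_evConn {γN : ℕ → Curve} {γ : Curve} (hlen : γ.len = 1)
    (hlenN : ∀ N, (γN N).len = 1)
    (hconv : Tendsto (fun N => dInf (γN N) γ) atTop (nhds 0)) {x : ℂ} {r : ℝ}
    {u : ℝ} (hu : u ∈ Icc (0:ℝ) 1) (hux : γ.toFun u ∈ ball x r) :
    ∀ᶠ v in nhdsWithin u (Icc (0:ℝ) 1), EvConn γN x r u v := by
  obtain ⟨η, hη, hball⟩ := Metric.isOpen_iff.1 isOpen_ball _ hux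
  have hc := γ.cont
  rw [hlen] at hc
  obtain ⟨d, hd, hcd⟩ := Metric.continuousWithinAt_iff.1 (hc u hu) (η / 2) (half_pos hη)
  filter_upwards [self_mem_nhdsWithin, mem_nhdsWithin_of_mem_nhds (ball_mem_nhds u hd)]
    with v hv hvd
  filter_upwards [hconv.eventually_lt_const (half_pos hη)] with N hN
  have hmin : 0 ≤ min u v := le_min hu.1 hv.1
  have hmax : max u v ≤ 1 := max_le hu.2 hv.2
  refine mem_component_of_arc hmin (by rwa [hlenN]) (fun w hw => hball ?_)
    ⟨min_le_left _ _, le_max_left _ _⟩ ⟨min_le_right _ _, le_max_right _ _⟩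
  have hw1 : w ∈ Icc (0:ℝ) 1 := ⟨hmin.trans hw.1, hw.2.trans hmax⟩
  have hwd : dist w u < d := by
    refine lt_of_le_of_lt ?_ (mem_ball.1 hvd)
    rw [dist_comm w u, dist_comm v u]
    exact Real.dist_left_le_of_mem_uIcc hw
  have h1 := hcd hw1 hwd
  have h2 := dist_le_dInf (hlenN N) hlen hw1
  rw [mem_ball]
  linarith [dist_triangle ((γN N).toFun w) (γ.toFun w) (γ.toFun u)]

/-- Since `(u, v)` is not a touching, any curve close enough to `γ` has intersecting arcs around
the times `u` and `v` in a small ball around `γ u = γ v`. -/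
lemma evConn_of_eq {γN : ℕ → Curve} {γ : Curve} (hlen : γ.len = 1)
    (hlenN : ∀ N, (γN N).len = 1)
    (hconv : Tendsto (fun N => dInf (γN N) γ) atTop (nhds 0)) {x : ℂ} {r : ℝ}
    (hno : HasNoTouchings γ) {u v : ℝ} (hu : u ∈ Icc (0:ℝ) 1)
    (hv : v ∈ Icc (0:ℝ) 1) (hux : γ.toFun u ∈ ball x r) (huv : γ.toFun u = γ.toFun v) :
    EvConn γN x r u v := by
  wlog hlt : u < v generalizing u v
  · rcases (not_lt.1 hlt).eq_or_lt with rfl | h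
    · exact (eventually_evConn hlen hlenN hconv hu hux).self_of_nhdsWithin hu
    · exact (this hv hu (huv ▸ hux) huv.symm h).symm
  obtain ⟨η, hη, hball⟩ := Metric.isOpen_iff.1 isOpen_ball _ hux
  have hcb : closedBall (γ.toFun u) (η / 2) ⊆ ball x r :=
    (closedBall_subset_ball (half_lt_self hη)).trans hball
  have hn := hno u v
  unfold HasTouching at hn
  push Not at hn
  obtain ⟨ε, hε, hγ'⟩ := hn hu.1 hlt (hv.2.trans hlen.ge) huv (η / 2) (half_pos hη)
  filter_upwards [hconv.eventually_lt_const hε.1] with N hN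
  obtain ⟨p, ⟨a, ha, hap⟩, ⟨b, hb, hbp⟩⟩ :=
    hγ' (γN N) ((hlenN N).trans hlen.symm) (by rwa [dInf_comm])
  have hdu := dist_le_dInf (hlenN N) hlen hu
  have hdv := dist_le_dInf (hlenN N) hlen hv
  have hua := mem_component_of_maxInt (by rwa [hlenN])
    (mem_ball.2 (hdu.trans_lt (hN.trans hε.2))) hcb ha
  have hvb := mem_component_of_maxInt (by rwa [hlenN])
    (mem_ball.2 (hdv.trans_lt (hN.trans hε.2))) (huv ▸ hcb) hb
  rw [hap] at hua
  rw [hbp] at hvb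
  rw [connectedComponentIn_eq hua, ← connectedComponentIn_eq hvb]
  exact mem_connectedComponentIn (connectedComponentIn_nonempty_iff.1 ⟨_, hvb⟩)

/-- A union of classes of `EvConn` is relatively closed, since the complementary classes are
relatively open. So the times of such a union at which `γ` is in `K` form a compact set, and
their image is closed. -/
lemma isClosed_image {γN : ℕ → Curve} {γ : Curve} (hlen : γ.len = 1)
    (hlenN : ∀ N, (γN N).len = 1)
    (hconv : Tendsto (fun N => dInf (γN N) γ) atTop (nhds 0)) {x : ℂ} {r : ℝ}
    {K : Set ℂ} (hK : IsClosed K) (hKb : K ⊆ ball x r) (p : ℝ → Prop)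
    (hp : ∀ u v, EvConn γN x r u v → p v → p u) :
    IsClosed (γ.toFun '' {u | u ∈ Icc (0:ℝ) 1 ∧ γ.toFun u ∈ K ∧ p u}) := by
  have hc := γ.cont
  rw [hlen] at hc
  have hT : IsClosed (Icc (0:ℝ) 1 ∩ γ.toFun ⁻¹' K) :=
    hc.preimage_isClosed_of_isClosed isClosed_Icc hK
  have hA : IsClosed {u | u ∈ Icc (0:ℝ) 1 ∧ γ.toFun u ∈ K ∧ p u} := by
    refine isClosed_of_closure_subset fun u hu => ?_
    have huT : u ∈ Icc (0:ℝ) 1 ∩ γ.toFun ⁻¹' K :=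
      closure_minimal (t := Icc (0:ℝ) 1 ∩ γ.toFun ⁻¹' K) (fun w hw => ⟨hw.1, hw.2.1⟩) hT hu
    obtain ⟨w, hw, huw⟩ := ((mem_closure_iff_frequently.1 hu).and_eventually
      (eventually_nhdsWithin_iff.1
        (eventually_evConn hlen hlenN hconv huT.1 (hKb huT.2)))).exists
    exact ⟨huT.1, huT.2, hp u w (huw hw.1) hw.2.2⟩
  refine IsCompact.isClosed (IsCompact.image_of_continuousOn ?_ (hc.mono fun w hw => hw.1))
  exact isCompact_Icc.of_isClosed_subset hA fun w hw => hw.1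

end Curve

theorem stmt6 (γN : ℕ → Curve) (γ : Curve) (hlen : γ.len = 1) (hlenN : ∀ N, (γN N).len = 1)
    (hconv : Filter.Tendsto (fun N => Curve.dInf (γN N) γ) Filter.atTop (nhds 0))
    (hno : Curve.HasNoTouchings γ)
    (δ : ℝ) (hδ : 0 < δ) (s t : ℝ) (hs : s ∈ Set.Icc (0:ℝ) 1) (ht : t ∈ Set.Icc (0:ℝ) 1)
    (hst : DeltaConnectedIn δ γ s t) :
    ∃ N₀ : ℕ, ∀ N > N₀, DeltaConnectedIn (4 * δ) (γN N) s t := by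
  obtain ⟨x, hx⟩ := hst
  have hr : 4 * δ / 2 = 2 * δ := by ring
  suffices h : Curve.EvConn γN x (2 * δ) s t by
    obtain ⟨N₀, hN₀⟩ := eventually_atTop.1 h
    exact ⟨N₀, fun N hN => ⟨x, by rw [hr]; exact hN₀ N hN.le⟩⟩
  by_contra hnot
  have hKb : closedBall x (δ / 2) ⊆ ball x (2 * δ) := closedBall_subset_ball (by linarith)
  have hsF := connectedComponentIn_nonempty_iff.1 ⟨_, hx⟩
  have hCF := connectedComponentIn_subset (Curve.range γ ∩ ball x (δ / 2)) (γ.toFun s)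
  have hsK : γ.toFun s ∈ closedBall x (δ / 2) := ball_subset_closedBall hsF.2
  have htK : γ.toFun t ∈ closedBall x (δ / 2) := ball_subset_closedBall (hCF hx).2
  obtain ⟨y, -, ⟨u, ⟨hu, huK, hsu⟩, huy⟩, ⟨v, ⟨hv, -, hsv⟩, hvy⟩⟩ :=
    isPreconnected_closed_iff.1
      (isPreconnected_connectedComponentIn (F := Curve.range γ ∩ ball x (δ / 2))
        (x := γ.toFun s)) _ _
      (Curve.isClosed_image hlen hlenN hconv isClosed_closedBall hKb
        (fun w => Curve.EvConn γN x (2 * δ) s w) fun _ _ h h' => h'.trans h.symm)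
      (Curve.isClosed_image hlen hlenN hconv isClosed_closedBall hKb
        (fun w => ¬ Curve.EvConn γN x (2 * δ) s w) fun _ _ h h' h'' => h' (h''.trans h))
      -- The two closed images cover the component of `γ s`.
      (by
        intro z hz
        obtain ⟨⟨w, hw, rfl⟩, hwb⟩ := hCF hz
        rw [hlen] at hw
        by_cases h : Curve.EvConn γN x (2 * δ) s w
        · exact Or.inl ⟨w, ⟨hw, ball_subset_closedBall hwb, h⟩, rfl⟩
        · exact Or.inr ⟨w, ⟨hw, ball_subset_closedBall hwb, h⟩, rfl⟩)
      ⟨_, mem_connectedComponentIn hsF, s, ⟨hs, hsK,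
        Curve.evConn_of_eq hlen hlenN hconv hno hs hs (hKb hsK) rfl⟩, rfl⟩
      ⟨_, hx, t, ⟨ht, htK, hnot⟩, rfl⟩
  exact hsv (hsu.trans
    (Curve.evConn_of_eq hlen hlenN hconv hno hu hv (hKb huK) (huy.trans hvy.symm)))
end
end
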